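/- arXiv:2410.22576 — 11 statements merged into one kernel-verified Lean document; each statement's English description precedes it below -/
import Mathlib

section
/- Let h : ℝ^N → [0,∞) be a convex function, let c(x,y) = h(y − x), and let μ, ν be Borel probability measures on ℝ^N with μ absolutely continuous with respect to Lebesgue measure and with finite minimal transport cost for c. Let π be an optimal transport plan from μ to ν for the cost c, let (π_z)_{z ∈ ℝ^N} be the disintegration of π with respect to the projection onto the first coordinate, and for each z define the probability measure π̃_z by π̃_z(B) = π_z(B + z) for every Borel set B ⊆ ℝ^N. Then the set E = {z ∈ ℝ^N : there exist x, y ∈ supp(π̃_z) with (x,y) ∈ H_h} has μ-measure zero. -/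
open MeasureTheory Metric Set
open scoped ENNReal

noncomputable section

abbrev Euc (N : ℕ) := EuclideanSpace ℝ (Fin N)

/-- An admissible transport plan (coupling) between `μ` and `ν`. -/
def IsCoupling {N : ℕ} (μ ν : Measure (Euc N)) (π : Measure (Euc N × Euc N)) : Prop :=
  IsProbabilityMeasure π ∧ π.map Prod.fst = μ ∧ π.map Prod.snd = ν

/-- Total cost of a transport plan. -/
noncomputable def planCost {N : ℕ} (c : Euc N → Euc N → ℝ)
    (π : Measure (Euc N × Euc N)) : ℝ≥0∞ :=
  ∫⁻ p, ENNReal.ofReal (c p.1 p.2) ∂π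

/-- Minimal transport cost between `μ` and `ν` for the cost `c`. -/
noncomputable def minCost {N : ℕ} (c : Euc N → Euc N → ℝ)
    (μ ν : Measure (Euc N)) : ℝ≥0∞ :=
  ⨅ π ∈ {π : Measure (Euc N × Euc N) | IsCoupling μ ν π}, planCost c π

/-- `π` is an optimal transport plan from `μ` to `ν` for the cost `c`. -/
def IsOptimalPlan {N : ℕ} (c : Euc N → Euc N → ℝ) (μ ν : Measure (Euc N))
    (π : Measure (Euc N × Euc N)) : Prop :=
  IsCoupling μ ν π ∧ planCost c π = minCost c μ ν

/-- Secondary functional: the integral of the squared Euclidean distance. -/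
noncomputable def secondaryCost {N : ℕ} (π : Measure (Euc N × Euc N)) : ℝ≥0∞ :=
  ∫⁻ p, ENNReal.ofReal (dist p.1 p.2 ^ 2) ∂π

/-- `π` belongs to `Π₂(μ,ν)`: it is optimal for `c` and minimises the secondary
functional among optimal plans. -/
def IsSecondaryOptimal {N : ℕ} (c : Euc N → Euc N → ℝ) (μ ν : Measure (Euc N))
    (π : Measure (Euc N × Euc N)) : Prop :=
  IsOptimalPlan c μ ν π ∧
    ∀ π', IsOptimalPlan c μ ν π' → secondaryCost π ≤ secondaryCost π'

/-- A plan is induced by a map if it is the pushforward of `μ` under `x ↦ (x, T x)`. -/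
def InducedByMap {N : ℕ} (μ : Measure (Euc N)) (π : Measure (Euc N × Euc N)) : Prop :=
  ∃ T : Euc N → Euc N, AEMeasurable T μ ∧ π = μ.map (fun x => (x, T x))

/-- The set of strict convexity of a convex function `h`. -/
def strictConvexitySet {N : ℕ} (h : Euc N → ℝ) : Set (Euc N × Euc N) :=
  {p | ∀ t : ℝ, t ∈ Set.Ioo (0 : ℝ) 1 →
    h (t • p.1 + (1 - t) • p.2) < t * h p.1 + (1 - t) * h p.2}

/-- The (topological) support of a measure: points all of whose neighbourhoods
have positive measure. -/
def msupport {N : ℕ} (m : Measure (Euc N)) : Set (Euc N) :=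
  {x | ∀ U ∈ nhds x, 0 < m U}

/-- Optimal plans for continuous costs have 2-monotone support. -/
theorem support_two_monotone {N : ℕ} (c : Euc N → Euc N → ℝ)
    (hc : Continuous (fun p : Euc N × Euc N => c p.1 p.2)) (hc0 : ∀ x y, 0 ≤ c x y)
    (μ ν : Measure (Euc N)) (hfin : minCost c μ ν ≠ ⊤)
    (π : Measure (Euc N × Euc N)) (hopt : IsOptimalPlan c μ ν π)
    (p q : Euc N × Euc N) (hp : p ∈ π.support) (hq : q ∈ π.support) :
    c p.1 p.2 + c q.1 q.2 ≤ c p.1 q.2 + c q.1 p.2 := by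
  by_contra! hlt
  obtain ⟨⟨hprob, hfst, hsnd⟩, hcost⟩ := hopt
  have hcm : Measurable (fun p : Euc N × Euc N => ENNReal.ofReal (c p.1 p.2)) :=
    hc.measurable.ennreal_ofReal
  let S : Set ((Euc N × Euc N) × (Euc N × Euc N)) :=
    {w | c w.1.1 w.2.2 + c w.2.1 w.1.2 < c w.1.1 w.1.2 + c w.2.1 w.2.2}
  have hS : IsOpen S := by
    apply isOpen_lt
    · exact (hc.comp (f := fun w : (Euc N × Euc N) × (Euc N × Euc N) => (w.1.1, w.2.2))
        (by fun_prop)).add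
        (hc.comp (f := fun w : (Euc N × Euc N) × (Euc N × Euc N) => (w.2.1, w.1.2))
        (by fun_prop))
    · exact (hc.comp (f := fun w : (Euc N × Euc N) × (Euc N × Euc N) => w.1)
        (by fun_prop)).add
        (hc.comp (f := fun w : (Euc N × Euc N) × (Euc N × Euc N) => w.2)
        (by fun_prop))
  obtain ⟨U, V, hU, hV, hpU, hqV, hUV⟩ := isOpen_prod_iff.1 hS p q hlt
  have hUpos : 0 < π U := (Measure.mem_support_iff_forall p).1 hp U (hU.mem_nhds hpU)
  have hVpos : 0 < π V := (Measure.mem_support_iff_forall q).1 hq V (hV.mem_nhds hqV)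
  let P : Measure ((Euc N × Euc N) × (Euc N × Euc N)) := (π.restrict U).prod (π.restrict V)
  let f1 : (Euc N × Euc N) × (Euc N × Euc N) → Euc N × Euc N := fun w => (w.1.1, w.2.2)
  let f2 : (Euc N × Euc N) × (Euc N × Euc N) → Euc N × Euc N := fun w => (w.2.1, w.1.2)
  have hf1 : Measurable f1 := by fun_prop
  have hf2 : Measurable f2 := by fun_prop
  let ρ : Measure (Euc N × Euc N) := (2⁻¹ : ℝ≥0∞) • (P.map Prod.fst + P.map Prod.snd)
  let σ : Measure (Euc N × Euc N) := (2⁻¹ : ℝ≥0∞) • (P.map f1 + P.map f2)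
  have h1 : P.map Prod.fst ≤ π := by
    simp only [P, Measure.map_fst_prod]
    refine le_trans ?_ (Measure.restrict_le_self (s := U))
    intro s
    simp only [Measure.smul_apply, smul_eq_mul]
    exact mul_le_of_le_one_left (zero_le) (by simpa using prob_le_one)
  have h2 : P.map Prod.snd ≤ π := by
    simp only [P, Measure.map_snd_prod]
    refine le_trans ?_ (Measure.restrict_le_self (s := V))
    intro s
    simp only [Measure.smul_apply, smul_eq_mul]
    exact mul_le_of_le_one_left (zero_le) (by simpa using prob_le_one)
  have hρ : ρ ≤ π := by
    intro s
    simp only [ρ, Measure.smul_apply, smul_eq_mul, Measure.add_apply]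
    calc (2⁻¹ : ℝ≥0∞) * (P.map Prod.fst s + P.map Prod.snd s) ≤ 2⁻¹ * (π s + π s) := by
          exact mul_le_mul_right (add_le_add (h1 s) (h2 s)) _
      _ = π s := by
          rw [← two_mul, ← mul_assoc, ENNReal.inv_mul_cancel (by simp) (by simp), one_mul]
  have : IsFiniteMeasure ρ := isFiniteMeasure_of_le π hρ
  have hsub : π - ρ + ρ = π := Measure.sub_add_cancel_of_le hρ
  have hm1 : ρ.map Prod.fst = σ.map Prod.fst := by
    simp only [ρ, σ, Measure.map_smul, Measure.map_add _ _ measurable_fst]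
    rw [Measure.map_map measurable_fst measurable_fst, Measure.map_map measurable_fst measurable_snd,
      Measure.map_map measurable_fst hf1, Measure.map_map measurable_fst hf2]
    rfl
  have hm2 : ρ.map Prod.snd = σ.map Prod.snd := by
    simp only [ρ, σ, Measure.map_smul, Measure.map_add _ _ measurable_snd]
    rw [Measure.map_map measurable_snd measurable_fst, Measure.map_map measurable_snd measurable_snd,
      Measure.map_map measurable_snd hf1, Measure.map_map measurable_snd hf2, add_comm]
    rfl
  have hc1 : (π - ρ + σ).map Prod.fst = μ := by
    rw [Measure.map_add _ _ measurable_fst, ← hm1, ← Measure.map_add _ _ measurable_fst, hsub, hfst]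
  have hc2 : (π - ρ + σ).map Prod.snd = ν := by
    rw [Measure.map_add _ _ measurable_snd, ← hm2, ← Measure.map_add _ _ measurable_snd, hsub, hsnd]
  have hcoup : IsCoupling μ ν (π - ρ + σ) := by
    refine ⟨⟨?_⟩, hc1, hc2⟩
    have e1 : (π - ρ + σ).map Prod.fst univ = π.map Prod.fst univ := by rw [hc1, hfst]
    rw [Measure.map_apply measurable_fst .univ, Measure.map_apply measurable_fst .univ] at e1
    simpa using e1
  have hle : planCost c π ≤ planCost c (π - ρ + σ) := by
    rw [hcost]
    exact iInf₂_le _ hcoup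
  have hπfin : planCost c π ≠ ⊤ := by rwa [hcost]
  have hsplit : planCost c (π - ρ) + planCost c ρ = planCost c π := by
    conv_rhs => rw [← hsub]
    simp only [planCost]
    rw [lintegral_add_measure]
  have hsplit2 : planCost c (π - ρ + σ) = planCost c (π - ρ) + planCost c σ := by
    simp only [planCost]
    rw [lintegral_add_measure]
  have hfinA : planCost c (π - ρ) ≠ ⊤ := fun h => hπfin (by rw [← hsplit, h, top_add])
  have hfinρ : planCost c ρ ≠ ⊤ := fun h => hπfin (by rw [← hsplit, h, add_top])
  have hρσ : planCost c ρ ≤ planCost c σ := by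
    rw [← hsplit, hsplit2] at hle
    exact (ENNReal.add_le_add_iff_left hfinA).1 hle
  let G : (Euc N × Euc N) × (Euc N × Euc N) → ℝ≥0∞ := fun w =>
    ENNReal.ofReal (c w.1.1 w.1.2) + ENNReal.ofReal (c w.2.1 w.2.2)
  let F : (Euc N × Euc N) × (Euc N × Euc N) → ℝ≥0∞ := fun w =>
    ENNReal.ofReal (c w.1.1 w.2.2) + ENNReal.ofReal (c w.2.1 w.1.2)
  have hGm : Measurable G := (hcm.comp measurable_fst).add (hcm.comp measurable_snd)
  have eρ : planCost c ρ = 2⁻¹ * ∫⁻ w, G w ∂P := by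
    simp only [planCost, ρ, G]
    rw [lintegral_smul_measure, lintegral_add_measure, lintegral_map hcm measurable_fst,
      lintegral_map hcm measurable_snd, smul_eq_mul]
    exact congrArg _ (lintegral_add_left (hcm.comp measurable_fst) _).symm
  have eσ : planCost c σ = 2⁻¹ * ∫⁻ w, F w ∂P := by
    simp only [planCost, σ, F]
    rw [lintegral_smul_measure, lintegral_add_measure, lintegral_map hcm hf1,
      lintegral_map hcm hf2, smul_eq_mul]
    exact congrArg _ (lintegral_add_left (hcm.comp hf1) _).symm
  have hae : ∀ᵐ w ∂P, F w < G w := by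
    have hPr : P = (π.prod π).restrict (U ×ˢ V) := Measure.prod_restrict U V
    rw [hPr]
    refine (ae_restrict_mem (hU.measurableSet.prod hV.measurableSet)).mono fun w hw => ?_
    have hw' : c w.1.1 w.2.2 + c w.2.1 w.1.2 < c w.1.1 w.1.2 + c w.2.1 w.2.2 := hUV hw
    simp only [F, G]
    rw [← ENNReal.ofReal_add (hc0 _ _) (hc0 _ _), ← ENNReal.ofReal_add (hc0 _ _) (hc0 _ _)]
    exact (ENNReal.ofReal_lt_ofReal_iff_of_nonneg (add_nonneg (hc0 _ _) (hc0 _ _))).2 hw'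
  have hGfin : ∫⁻ w, G w ∂P ≠ ⊤ := by
    intro h
    apply hfinρ
    rw [eρ, h]
    exact ENNReal.mul_top (by simp)
  have hFfin : ∫⁻ w, F w ∂P ≠ ⊤ :=
    ne_top_of_le_ne_top hGfin (lintegral_mono_ae (hae.mono fun w hw => hw.le))
  have hP0 : P ≠ 0 := by
    intro h
    have : P univ = 0 := by rw [h]; rfl
    rw [← univ_prod_univ, Measure.prod_prod, Measure.restrict_apply_univ,
      Measure.restrict_apply_univ] at this
    exact (ENNReal.mul_pos hUpos.ne' hVpos.ne').ne' this
  have hstrict := lintegral_strict_mono hP0 hGm.aemeasurable hFfin hae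
  rw [eρ, eσ] at hρσ
  exact absurd ((ENNReal.mul_le_mul_iff_right (by simp) (by simp)).1 hρσ) (not_le.2 hstrict)

theorem strict_nhd {N : ℕ} (h : Euc N → ℝ) (hconv : ConvexOn ℝ Set.univ h)
    (hcont : Continuous h) (p : Euc N × Euc N) (hp : p ∈ strictConvexitySet h) :
    ∃ r > 0, ∀ q ∈ closedBall p r, ∀ t : ℝ, 0 < t → t < 1 / 2 →
      h (q.2 + t • (p.1 - p.2)) + h (q.1 - t • (p.1 - p.2)) < h q.1 + h q.2 := by
  set u := p.1 - p.2 with hu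
  let S : Set (Euc N × Euc N) :=
    {q | h (q.2 + (1/2 : ℝ) • u) + h (q.1 - (1/2 : ℝ) • u) < h q.1 + h q.2}
  have hS : IsOpen S := isOpen_lt (by fun_prop) (by fun_prop)
  have hpS : p ∈ S := by
    have := hp (1/2) (by norm_num)
    have e1 : p.2 + (1/2 : ℝ) • u = (1/2 : ℝ) • p.1 + (1 - (1/2 : ℝ)) • p.2 := by
      rw [hu]; module
    have e2 : p.1 - (1/2 : ℝ) • u = (1/2 : ℝ) • p.1 + (1 - (1/2 : ℝ)) • p.2 := by
      rw [hu]; module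
    show h (p.2 + (1/2 : ℝ) • u) + h (p.1 - (1/2 : ℝ) • u) < h p.1 + h p.2
    rw [e1, e2]
    linarith
  obtain ⟨r, hr, hrS⟩ := nhds_basis_closedBall.mem_iff.1 (hS.mem_nhds hpS)
  refine ⟨r, hr, fun q hq t ht0 ht1 => ?_⟩
  have hqS : h (q.2 + (1/2 : ℝ) • u) + h (q.1 - (1/2 : ℝ) • u) < h q.1 + h q.2 := hrS hq
  have a1 := hconv.2 (mem_univ q.2) (mem_univ (q.2 + (1/2 : ℝ) • u))
    (by linarith : 0 ≤ 1 - 2 * t) (by linarith : 0 ≤ 2 * t) (by ring)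
  have a2 := hconv.2 (mem_univ q.1) (mem_univ (q.1 - (1/2 : ℝ) • u))
    (by linarith : 0 ≤ 1 - 2 * t) (by linarith : 0 ≤ 2 * t) (by ring)
  have e1 : (1 - 2 * t) • q.2 + (2 * t) • (q.2 + (1/2 : ℝ) • u) = q.2 + t • u := by module
  have e2 : (1 - 2 * t) • q.1 + (2 * t) • (q.1 - (1/2 : ℝ) • u) = q.1 - t • u := by module
  rw [e1] at a1
  rw [e2] at a2
  simp only [smul_eq_mul] at a1 a2
  nlinarith [mul_pos ht0 (sub_pos.2 hqS)]

theorem piece_null {N : ℕ} (h : Euc N → ℝ) (Γ : Set (Euc N × Euc N)) (hΓ : IsClosed Γ)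
    (hmono : ∀ p ∈ Γ, ∀ q ∈ Γ,
      h (p.2 - p.1) + h (q.2 - q.1) ≤ h (q.2 - p.1) + h (p.2 - q.1))
    (p : Euc N × Euc N) (r : ℝ)
    (hr : ∀ q ∈ closedBall p r, ∀ t : ℝ, 0 < t → t < 1 / 2 →
      h (q.2 + t • (p.1 - p.2)) + h (q.1 - t • (p.1 - p.2)) < h q.1 + h q.2) :
    volume {z : Euc N | ∃ q ∈ closedBall p r, (z, z + q.1) ∈ Γ ∧ (z, z + q.2) ∈ Γ} = 0 := by
  set A := {z : Euc N | ∃ q ∈ closedBall p r, (z, z + q.1) ∈ Γ ∧ (z, z + q.2) ∈ Γ} with hA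
  have hAc : IsClosed A := by
    have : CompactSpace (closedBall p r) := isCompact_iff_compactSpace.1 (isCompact_closedBall p r)
    let T : Set (Euc N × closedBall p r) :=
      {w | (w.1, w.1 + w.2.1.1) ∈ Γ} ∩ {w | (w.1, w.1 + w.2.1.2) ∈ Γ}
    have hT : IsClosed T :=
      (hΓ.preimage (f := fun w : Euc N × closedBall p r => (w.1, w.1 + w.2.1.1))
        (by fun_prop)).inter
      (hΓ.preimage (f := fun w : Euc N × closedBall p r => (w.1, w.1 + w.2.1.2)) (by fun_prop))
    have : A = Prod.fst '' T := by
      ext z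
      constructor
      · rintro ⟨q, hq, h1, h2⟩
        exact ⟨(z, ⟨q, hq⟩), ⟨h1, h2⟩, rfl⟩
      · rintro ⟨⟨z', q⟩, ⟨h1, h2⟩, rfl⟩
        exact ⟨q.1, q.2, h1, h2⟩
    rw [this]
    exact isClosedMap_fst_of_compactSpace _ hT
  by_contra hne
  have hst := Measure.sub_mem_nhds_zero_of_addHaar_pos (volume : Measure (Euc N)) A
    hAc.measurableSet (pos_iff_ne_zero.2 hne)
  have htend : Filter.Tendsto (fun t : ℝ => t • (p.1 - p.2)) (nhdsWithin 0 (Ioi 0)) (nhds 0) := by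
    have : Continuous (fun t : ℝ => t • (p.1 - p.2)) := by fun_prop
    have := this.tendsto 0
    rw [zero_smul] at this
    exact this.mono_left nhdsWithin_le_nhds
  have hev := (htend.eventually hst).and
    (Ioo_mem_nhdsGT (show (0:ℝ) < 1/2 by norm_num))
  obtain ⟨t, ht, ht0, ht1⟩ := hev.exists
  obtain ⟨z', ⟨q', hq', -, hz'⟩, z, ⟨q, hq, hz, -⟩, hd⟩ := ht
  have hd' : z' - z = t • (p.1 - p.2) := hd
  have hm := hmono _ hz _ hz'
  simp only [add_sub_cancel_left] at hm
  have e1 : z' + q'.2 - z = q'.2 + t • (p.1 - p.2) := by rw [← hd']; abel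
  have e2 : z + q.1 - z' = q.1 - t • (p.1 - p.2) := by rw [← hd']; abel
  rw [e1, e2] at hm
  have hmem : (q.1, q'.2) ∈ closedBall p r := by
    rw [mem_closedBall, Prod.dist_eq] at *
    exact max_le ((le_max_left _ _).trans hq) ((le_max_right _ _).trans hq')
  have := hr _ hmem t ht0 ht1
  simp only at this
  linarith

theorem strict_convexity_pairs_null {N : ℕ} (h : Euc N → ℝ)
    (hconv : ConvexOn ℝ Set.univ h) (hnonneg : ∀ x, 0 ≤ h x)
    (μ ν : Measure (Euc N)) [IsProbabilityMeasure μ] [IsProbabilityMeasure ν]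
    (hac : μ ≪ volume)
    (hfin : minCost (fun x y => h (y - x)) μ ν ≠ ⊤)
    (π : Measure (Euc N × Euc N))
    (hopt : IsOptimalPlan (fun x y => h (y - x)) μ ν π)
    -- `(πz z)` is the disintegration of `π` with respect to the first projection:
    (πz : Euc N → Measure (Euc N))
    (hπzprob : ∀ z, IsProbabilityMeasure (πz z))
    (hdisint : ∀ s : Set (Euc N × Euc N), MeasurableSet s →
      π s = ∫⁻ z, πz z {w | (z, w) ∈ s} ∂μ) :
    -- `π̃_z := (πz z).map (· - z)`, i.e. `π̃_z B = π_z (B + z)`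
    μ {z | ∃ x ∈ msupport ((πz z).map (fun w => w - z)),
           ∃ y ∈ msupport ((πz z).map (fun w => w - z)),
           (x, y) ∈ strictConvexitySet h} = 0 := by
  have hcont : Continuous h := hconv.locallyLipschitz.continuous
  have hc : Continuous (fun p : Euc N × Euc N => h (p.2 - p.1)) := by fun_prop
  have hmono : ∀ p ∈ π.support, ∀ q ∈ π.support,
      h (p.2 - p.1) + h (q.2 - q.1) ≤ h (q.2 - p.1) + h (p.2 - q.1) := fun p hp q hq =>
    support_two_monotone (fun x y => h (y - x)) hc (fun x y => hnonneg _) μ ν hfin π hopt p q hp hq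
  have : IsProbabilityMeasure π := hopt.1.1
  have hcl : IsClosed π.support := Measure.isClosed_support
  -- almost every fibre is carried by the section of the support
  have hfib : ∀ᵐ z ∂μ, πz z {w | (z, w) ∈ π.support} = 1 := by
    have h1 : π π.support = 1 := by
      rw [← prob_compl_eq_zero_iff hcl.measurableSet]
      exact Measure.measure_compl_support
    rw [hdisint _ hcl.measurableSet] at h1
    obtain ⟨g, hg, hgle, hgeq⟩ :=
      exists_measurable_le_lintegral_eq (μ := μ) (fun z => πz z {w | (z, w) ∈ π.support})
    have hle1 : ∀ z, πz z {w | (z, w) ∈ π.support} ≤ 1 := fun z => by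
      have := hπzprob z
      exact prob_le_one
    have hg1 : g =ᵐ[μ] fun _ => (1 : ℝ≥0∞) := by
      apply ae_eq_of_ae_le_of_lintegral_le
      · exact Filter.Eventually.of_forall fun z => (hgle z).trans (hle1 z)
      · rw [← hgeq, h1]; simp
      · exact aemeasurable_const
      · rw [← hgeq, h1]; simp
    filter_upwards [hg1] with z hz
    exact le_antisymm (hle1 z) (hz ▸ hgle z)
  have hsupp : ∀ᵐ z ∂μ, ∀ x ∈ msupport ((πz z).map (fun w => w - z)), (z, z + x) ∈ π.support := by
    filter_upwards [hfib] with z hz x hx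
    have := hπzprob z
    have hclz : IsClosed {w | (z, w) ∈ π.support} := hcl.preimage (by fun_prop)
    by_contra hnot
    have hO : IsOpen {x' : Euc N | (z, z + x') ∈ π.supportᶜ} :=
      hcl.isOpen_compl.preimage (f := fun x' : Euc N => (z, z + x')) (by fun_prop)
    have hpos := hx _ (hO.mem_nhds hnot)
    rw [Measure.map_apply (by fun_prop) hO.measurableSet] at hpos
    have hz0 := (prob_compl_eq_zero_iff hclz.measurableSet).2 hz
    have : (fun w => w - z) ⁻¹' {x' : Euc N | (z, z + x') ∈ π.supportᶜ}
        = {w | (z, w) ∈ π.support}ᶜ := by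
      ext w
      simp
    rw [this, hz0] at hpos
    exact lt_irrefl _ hpos
  -- countable cover of the strict convexity set
  have hex : ∀ p : Euc N × Euc N, ∃ r : ℝ, p ∈ strictConvexitySet h → 0 < r ∧
      ∀ q ∈ closedBall p r, ∀ t : ℝ, 0 < t → t < 1 / 2 →
      h (q.2 + t • (p.1 - p.2)) + h (q.1 - t • (p.1 - p.2)) < h q.1 + h q.2 := by
    intro p
    by_cases hp : p ∈ strictConvexitySet h
    · obtain ⟨r, hr, hr'⟩ := strict_nhd h hconv hcont p hp
      exact ⟨r, fun _ => ⟨hr, hr'⟩⟩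
    · exact ⟨0, fun h' => absurd h' hp⟩
  choose r hr using hex
  obtain ⟨C, hCsub, hCc, hCcov⟩ := TopologicalSpace.countable_cover_nhdsWithin
    (s := strictConvexitySet h) (f := fun p => closedBall p (r p))
    (fun p hp => mem_nhdsWithin_of_mem_nhds (closedBall_mem_nhds p (hr p hp).1))
  have hnull : μ (⋃ p ∈ C, {z : Euc N | ∃ q ∈ closedBall p (r p),
      (z, z + q.1) ∈ π.support ∧ (z, z + q.2) ∈ π.support}) = 0 := by
    rw [measure_biUnion_null_iff hCc]
    intro p hp
    exact hac (piece_null h π.support hcl hmono p (r p) (hr p (hCsub hp)).2)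
  have hae : ∀ᵐ z ∂μ, z ∉ {z | ∃ x ∈ msupport ((πz z).map (fun w => w - z)),
           ∃ y ∈ msupport ((πz z).map (fun w => w - z)),
           (x, y) ∈ strictConvexitySet h} := by
    filter_upwards [hsupp, measure_eq_zero_iff_ae_notMem.1 hnull] with z hz hz'
    rintro ⟨x, hx, y, hy, hxy⟩
    apply hz'
    obtain ⟨p, hp, hpq⟩ := mem_iUnion₂.1 (hCcov hxy)
    exact mem_iUnion₂.2 ⟨p, hp, (x, y), hpq, hz x hx, hz y hy⟩
  exact measure_eq_zero_iff_ae_notMem.2 hae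
end
end

section
/- Let h : ℝ^N → [0,∞) be a strictly convex function, let c(x,y) = h(y − x), and let μ, ν be Borel probability measures on ℝ^N with μ absolutely continuous with respect to Lebesgue measure and with finite minimal transport cost for c. Then the set of optimal transport plans from μ to ν has a unique element, and this unique optimal plan is induced by a map, i.e. it equals (id, T)_# μ for some μ-measurable map T : ℝ^N → ℝ^N. -/
open MeasureTheory Metric Set
open scoped ENNReal

noncomputable section

/-- Existence of optimal plans. -/
theorem exists_optimalPlan {N : ℕ} {c : Euc N → Euc N → ℝ}
    (hc : Continuous fun p : Euc N × Euc N => c p.1 p.2)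
    (μ ν : Measure (Euc N)) [IsProbabilityMeasure μ] [IsProbabilityMeasure ν] :
    ∃ π, IsOptimalPlan c μ ν π := by
  set S : Set (ProbabilityMeasure (Euc N × Euc N)) :=
    {π | IsCoupling μ ν (π : Measure (Euc N × Euc N))} with hS
  let μ' : ProbabilityMeasure (Euc N) := ⟨μ, inferInstance⟩
  let ν' : ProbabilityMeasure (Euc N) := ⟨ν, inferInstance⟩
  have hcl : ∀ (m : ProbabilityMeasure (Euc N))
      (F : ProbabilityMeasure (Euc N × Euc N) → ProbabilityMeasure (Euc N)), Continuous F →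
      IsClosed {π | F π = m} := fun m F hF => isClosed_singleton.preimage hF
  have hSeq : S = {π | π.map (f := Prod.fst) measurable_fst.aemeasurable =
        μ'} ∩
      {π | π.map (f := Prod.snd) measurable_snd.aemeasurable =
        ν'} := by
    ext π
    simp only [hS, IsCoupling, mem_ofPred_eq, mem_inter_iff]
    constructor
    · rintro ⟨_, h1, h2⟩
      exact ⟨Subtype.ext h1, Subtype.ext h2⟩
    · rintro ⟨h1, h2⟩
      exact ⟨inferInstance, congrArg Subtype.val h1, congrArg Subtype.val h2⟩
  have hclosed : IsClosed S := by
    rw [hSeq]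
    exact (hcl μ' _ (ProbabilityMeasure.continuous_map continuous_fst)).inter
      (hcl ν' _ (ProbabilityMeasure.continuous_map continuous_snd))
  have htight : IsTightMeasureSet
      {((π : ProbabilityMeasure (Euc N × Euc N)) : Measure (Euc N × Euc N)) | π ∈ S} := by
    apply IsTightMeasureSet.prodMk
    · refine (isTightMeasureSet_singleton (μ := μ)).subset ?_
      rintro _ ⟨_, ⟨π, hπ, rfl⟩, rfl⟩
      exact hπ.2.1
    · refine (isTightMeasureSet_singleton (μ := ν)).subset ?_
      rintro _ ⟨_, ⟨π, hπ, rfl⟩, rfl⟩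
      exact hπ.2.2
  have hcomp : IsCompact S := by
    have := isCompact_closure_of_isTightMeasureSet htight
    rwa [hclosed.closure_eq] at this
  have hne : S.Nonempty := by
    refine ⟨⟨μ.prod ν, inferInstance⟩, ?_⟩
    refine ⟨by simp; infer_instance, ?_, ?_⟩ <;> simp
  have hlsc : LowerSemicontinuous
      fun π : ProbabilityMeasure (Euc N × Euc N) => planCost c (π : Measure (Euc N × Euc N)) := by
    let g : ℕ → BoundedContinuousFunction (Euc N × Euc N) NNReal := fun n =>
      BoundedContinuousFunction.mkOfBound
        ⟨fun p => min (Real.toNNReal (c p.1 p.2)) n,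
          (continuous_real_toNNReal.comp hc).min continuous_const⟩ n (by
          intro p q
          rw [NNReal.dist_eq, abs_le]
          have a1 : ((min (Real.toNNReal (c p.1 p.2)) n : NNReal) : ℝ) ≤ n := by
            exact_mod_cast min_le_right _ _
          have a2 : ((min (Real.toNNReal (c q.1 q.2)) n : NNReal) : ℝ) ≤ n := by
            exact_mod_cast min_le_right _ _
          have a3 := NNReal.coe_nonneg (min (Real.toNNReal (c p.1 p.2)) n)
          have a4 := NNReal.coe_nonneg (min (Real.toNNReal (c q.1 q.2)) n)
          simp only [ContinuousMap.coe_mk]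
          constructor <;> linarith)
    have hg : ∀ n p, g n p = min (Real.toNNReal (c p.1 p.2)) n := fun n p => rfl
    have heq : (fun π : ProbabilityMeasure (Euc N × Euc N) =>
        planCost c (π : Measure (Euc N × Euc N))) =
        fun π : ProbabilityMeasure (Euc N × Euc N) => ⨆ n, ∫⁻ p, (g n p : ℝ≥0∞) ∂(π : Measure (Euc N × Euc N)) := by
      funext π
      rw [← lintegral_iSup]
      · refine lintegral_congr fun p => ?_
        apply le_antisymm
        · obtain ⟨n, hn⟩ := exists_nat_ge (Real.toNNReal (c p.1 p.2))
          refine le_iSup_of_le n ?_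
          rw [hg, min_eq_left hn]; rfl
        · refine iSup_le fun n => ?_
          rw [hg]
          exact ENNReal.coe_le_coe.2 (min_le_left _ _)
      · intro n
        exact (g n).continuous.measurable.coe_nnreal_ennreal
      · intro m n hmn p
        simp only [hg]
        exact ENNReal.coe_le_coe.2 (min_le_min le_rfl (by exact_mod_cast hmn))
    rw [heq]
    exact lowerSemicontinuous_iSup fun n =>
      (ProbabilityMeasure.continuous_lintegral_boundedContinuousFunction (g n)).lowerSemicontinuous
  obtain ⟨π, hπS, hmin⟩ := (hlsc.lowerSemicontinuousOn S).exists_isMinOn hne hcomp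
  refine ⟨π, hπS, le_antisymm ?_ (iInf₂_le (π : Measure (Euc N × Euc N)) hπS)⟩
  refine le_iInf₂ fun π' hπ' => ?_
  have hπ'2 : IsCoupling μ ν π' := hπ'
  exact hmin (a := ⟨π', hπ'2.1⟩) hπ'2

/-- Two-point monotonicity of the support of an optimal plan. -/
theorem support_monotone {N : ℕ} {c : Euc N → Euc N → ℝ}
    (hc : Continuous fun p : Euc N × Euc N => c p.1 p.2) (hc0 : ∀ x y, 0 ≤ c x y)
    {μ ν : Measure (Euc N)} [IsProbabilityMeasure μ]
    (hfin : minCost c μ ν ≠ ⊤) {π : Measure (Euc N × Euc N)}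
    (hπ : IsOptimalPlan c μ ν π) {p q : Euc N × Euc N}
    (hp : p ∈ π.support) (hq : q ∈ π.support) :
    c p.1 p.2 + c q.1 q.2 ≤ c p.1 q.2 + c q.1 p.2 := by
  by_contra! hlt
  obtain ⟨⟨hprob, hfst, hsnd⟩, hcost⟩ := hπ
  have hc' : ∀ {X : Type} [TopologicalSpace X] (f g : X → Euc N), Continuous f → Continuous g →
      Continuous fun x => c (f x) (g x) := fun f g hf hg => hc.comp (hf.prodMk hg)
  have hopen : IsOpen {z : (Euc N × Euc N) × (Euc N × Euc N) |
      c z.1.1 z.2.2 + c z.2.1 z.1.2 < c z.1.1 z.1.2 + c z.2.1 z.2.2} :=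
    isOpen_lt ((hc' _ _ (by fun_prop) (by fun_prop)).add (hc' _ _ (by fun_prop) (by fun_prop)))
      ((hc' _ _ (by fun_prop) (by fun_prop)).add (hc' _ _ (by fun_prop) (by fun_prop)))
  obtain ⟨U, V, hU, hV, hpU, hqV, hUV⟩ := isOpen_prod_iff.1 hopen p q hlt
  have hU0 : 0 < π U := (Measure.mem_support_iff_forall p).1 hp U (hU.mem_nhds hpU)
  have hV0 : 0 < π V := (Measure.mem_support_iff_forall q).1 hq V (hV.mem_nhds hqV)
  set P := (π.restrict U).prod (π.restrict V) with hP
  have hPU : P.map Prod.fst = π V • π.restrict U := by simp [hP]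
  have hPV : P.map Prod.snd = π U • π.restrict V := by simp [hP]
  have hP0 : P ≠ 0 := by
    intro h0
    have : P univ = π U * π V := by
      rw [hP, ← univ_prod_univ, Measure.prod_prod]; simp
    rw [h0] at this
    simp at this
    rcases this with h | h
    · exact hU0.ne' h
    · exact hV0.ne' h
  have hPf : P.map Prod.fst ≤ π := by
    rw [hPU]
    refine Measure.le_iff.2 fun s hs => ?_
    rw [Measure.smul_apply, smul_eq_mul]
    calc π V * π.restrict U s ≤ 1 * π s := mul_le_mul' prob_le_one (Measure.restrict_apply_le U s)
      _ = π s := one_mul _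
  have hPs : P.map Prod.snd ≤ π := by
    rw [hPV]
    refine Measure.le_iff.2 fun s hs => ?_
    rw [Measure.smul_apply, smul_eq_mul]
    calc π U * π.restrict V s ≤ 1 * π s := mul_le_mul' prob_le_one (Measure.restrict_apply_le V s)
      _ = π s := one_mul _
  set k : ℝ≥0∞ := 2⁻¹ with hk
  have hk1 : k + k = 1 := ENNReal.inv_two_add_inv_two
  have hktop : k ≠ ⊤ := by simp [hk]
  have hk0 : k ≠ 0 := by simp [hk]
  set G := k • P.map Prod.fst + k • P.map Prod.snd with hG
  have hGle : G ≤ π := by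
    refine Measure.le_iff.2 fun s hs => ?_
    simp only [hG, Measure.add_apply, Measure.smul_apply, smul_eq_mul]
    calc k * P.map Prod.fst s + k * P.map Prod.snd s ≤ k * π s + k * π s := by
          exact add_le_add (mul_le_mul' le_rfl (hPf s)) (mul_le_mul' le_rfl (hPs s))
      _ = π s := by rw [← add_mul, hk1, one_mul]
  have : IsFiniteMeasure G := ⟨(hGle univ).trans_lt (measure_lt_top _ _)⟩
  set σ := π - G with hσ
  have hdec : σ + G = π := Measure.sub_add_cancel_of_le hGle
  set f1 : (Euc N × Euc N) × (Euc N × Euc N) → Euc N × Euc N := fun z => (z.1.1, z.2.2)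
  set f2 : (Euc N × Euc N) × (Euc N × Euc N) → Euc N × Euc N := fun z => (z.2.1, z.1.2)
  have hf1 : Measurable f1 := by fun_prop
  have hf2 : Measurable f2 := by fun_prop
  set G' := k • P.map f1 + k • P.map f2 with hG'
  have mfst : Measurable (Prod.fst : Euc N × Euc N → Euc N) := measurable_fst
  have msnd : Measurable (Prod.snd : Euc N × Euc N → Euc N) := measurable_snd
  have hGf : G'.map Prod.fst = G.map Prod.fst := by
    rw [hG, hG', Measure.map_add _ _ mfst, Measure.map_add _ _ mfst]
    simp only [Measure.map_smul]
    rw [Measure.map_map mfst hf1, Measure.map_map mfst hf2,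
      Measure.map_map mfst measurable_fst, Measure.map_map mfst measurable_snd]
    rfl
  have hGs : G'.map Prod.snd = G.map Prod.snd := by
    rw [hG, hG', Measure.map_add _ _ msnd, Measure.map_add _ _ msnd]
    simp only [Measure.map_smul]
    rw [Measure.map_map msnd hf1, Measure.map_map msnd hf2,
      Measure.map_map msnd measurable_fst, Measure.map_map msnd measurable_snd, add_comm]
    rfl
  have hf' : (σ + G').map Prod.fst = μ := by
    rw [Measure.map_add _ _ mfst, hGf, ← Measure.map_add _ _ mfst, hdec, hfst]
  have hs' : (σ + G').map Prod.snd = ν := by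
    rw [Measure.map_add _ _ msnd, hGs, ← Measure.map_add _ _ msnd, hdec, hsnd]
  have hcoup : IsCoupling μ ν (σ + G') := by
    refine ⟨⟨?_⟩, hf', hs'⟩
    have : (σ + G').map Prod.fst univ = 1 := by rw [hf']; exact measure_univ
    rwa [Measure.map_apply mfst MeasurableSet.univ, preimage_univ] at this
  have hle : minCost c μ ν ≤ planCost c (σ + G') := iInf₂_le (σ + G') hcoup
  rw [← hcost] at hle hfin
  have hmc : Measurable fun p : Euc N × Euc N => ENNReal.ofReal (c p.1 p.2) :=
    hc.measurable.ennreal_ofReal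
  have hadd : ∀ a b : Measure (Euc N × Euc N),
      planCost c (a + b) = planCost c a + planCost c b := fun a b => lintegral_add_measure _ _ _
  have e1 : planCost c G = k * ∫⁻ z, (ENNReal.ofReal (c z.1.1 z.1.2) +
      ENNReal.ofReal (c z.2.1 z.2.2)) ∂P := by
    rw [hG, hadd, lintegral_add_left (f := fun z : (Euc N × Euc N) × (Euc N × Euc N) =>
      ENNReal.ofReal (c z.1.1 z.1.2)) (hmc.comp measurable_fst), mul_add]
    simp only [planCost, lintegral_smul_measure, smul_eq_mul]
    rw [lintegral_map hmc measurable_fst, lintegral_map hmc measurable_snd]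
  have e2 : planCost c G' = k * ∫⁻ z, (ENNReal.ofReal (c z.1.1 z.2.2) +
      ENNReal.ofReal (c z.2.1 z.1.2)) ∂P := by
    rw [hG', hadd, lintegral_add_left (f := fun z : (Euc N × Euc N) × (Euc N × Euc N) =>
      ENNReal.ofReal (c z.1.1 z.2.2)) (hmc.comp hf1), mul_add]
    simp only [planCost, lintegral_smul_measure, smul_eq_mul]
    rw [lintegral_map hmc hf1, lintegral_map hmc hf2]
  have hae : ∀ᵐ z ∂P, ENNReal.ofReal (c z.1.1 z.2.2) + ENNReal.ofReal (c z.2.1 z.1.2) <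
      ENNReal.ofReal (c z.1.1 z.1.2) + ENNReal.ofReal (c z.2.1 z.2.2) := by
    have : ∀ᵐ z ∂P, z ∈ U ×ˢ V := by
      rw [hP, Measure.prod_restrict]
      exact ae_restrict_mem (hU.measurableSet.prod hV.measurableSet)
    filter_upwards [this] with z hz
    have h1 := hUV hz
    simp only [mem_ofPred_eq] at h1
    rw [← ENNReal.ofReal_add (hc0 _ _) (hc0 _ _), ← ENNReal.ofReal_add (hc0 _ _) (hc0 _ _)]
    exact (ENNReal.ofReal_lt_ofReal_iff_of_nonneg (add_nonneg (hc0 _ _) (hc0 _ _))).2 h1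
  rw [← hdec, hadd] at hfin
  obtain ⟨hσf, hGfin⟩ := ENNReal.add_ne_top.1 hfin
  have hBfin : ∫⁻ z, (ENNReal.ofReal (c z.1.1 z.1.2) +
      ENNReal.ofReal (c z.2.1 z.2.2)) ∂P ≠ ⊤ := by
    intro h
    rw [e1, h, ENNReal.mul_top hk0] at hGfin
    exact hGfin rfl
  have hstrict := lintegral_strict_mono hP0
    ((hmc.comp measurable_fst).add (hmc.comp measurable_snd)).aemeasurable
    (ne_top_of_le_ne_top hBfin (lintegral_mono_ae (hae.mono fun z hz => hz.le))) hae
  have : planCost c G' < planCost c G := by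
    rw [e1, e2]
    exact (ENNReal.mul_lt_mul_iff_right hk0 hktop).2 hstrict
  have hlt2 : planCost c (σ + G') < planCost c π := by
    rw [← hdec, hadd σ G, hadd σ G']
    exact ENNReal.add_lt_add_left hσf this
  exact absurd hle (not_le.2 hlt2)

/-- If two-point monotonicity holds on a set, almost every fibre has at most one point. -/
theorem ae_fiber_subsingleton {N : ℕ} {h : Euc N → ℝ}
    (hconv : StrictConvexOn ℝ Set.univ h) (hcont : Continuous h)
    {Γ : Set (Euc N × Euc N)}
    (hΓ : ∀ p ∈ Γ, ∀ q ∈ Γ,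
      h (p.2 - p.1) + h (q.2 - q.1) ≤ h (q.2 - p.1) + h (p.2 - q.1)) :
    ∀ᵐ x ∂(volume : Measure (Euc N)), ∀ y₀ y₁, (x, y₀) ∈ Γ → (x, y₁) ∈ Γ → y₀ = y₁ := by
  set B := TopologicalSpace.countableBasis (Euc N) with hB
  have hBc : B.Countable := TopologicalSpace.countable_countableBasis _
  have hBb : TopologicalSpace.IsTopologicalBasis B :=
    TopologicalSpace.isBasis_countableBasis _
  set E : Set (Euc N) → Set (Euc N) := fun b => {x | ∃ y ∈ b, (x, y) ∈ Γ} with hE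
  have hdens : ∀ᵐ x ∂(volume : Measure (Euc N)), ∀ b ∈ B, ∀ K : ℕ, x ∈ E b →
      ∀ (w : ℕ → Euc N) (δ : ℕ → ℝ) (_ : Filter.Tendsto δ Filter.atTop (nhdsWithin 0 (Ioi 0)))
      (_ : ∀ᶠ j in Filter.atTop, x ∈ closedBall (w j) ((K : ℝ) * δ j)),
      Filter.Tendsto (fun j => volume (E b ∩ closedBall (w j) (δ j)) /
        volume (closedBall (w j) (δ j))) Filter.atTop (nhds 1) := by
    rw [ae_ball_iff hBc]
    intro b hb
    rw [ae_all_iff]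
    intro K
    filter_upwards [ae_imp_of_ae_restrict
      (IsUnifLocDoublingMeasure.ae_tendsto_measure_inter_div
        (volume : Measure (Euc N)) (E b) (K : ℝ))] with x hx hxE w δ h1 h2
    exact hx hxE w δ h1 h2
  filter_upwards [hdens] with x hx y₀ y₁ h0 h1
  by_contra hne
  set p₀ := y₀ - x with hp₀
  set p₁ := y₁ - x with hp₁
  set w := y₁ - y₀ with hw
  have hw0 : w ≠ 0 := sub_ne_zero.2 (Ne.symm hne)
  have hp : p₁ = p₀ + w := by simp [hp₀, hp₁, hw]
  -- strict gap at the limit configuration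
  have hgap : h (p₀ + (1/2 : ℝ) • w) - h p₀ < h p₁ - h (p₁ - (1/2 : ℝ) • w) := by
    have hne' : p₀ ≠ p₁ := by rw [hp]; simpa using hw0
    have := hconv.2 (mem_univ p₀) (mem_univ p₁) hne'
      (show (0 : ℝ) < 1/2 by norm_num) (show (0 : ℝ) < 1/2 by norm_num) (by norm_num)
    have e1 : (1/2 : ℝ) • p₀ + (1/2 : ℝ) • p₁ = p₀ + (1/2 : ℝ) • w := by rw [hp]; module
    have e2 : p₁ - (1/2 : ℝ) • w = p₀ + (1/2 : ℝ) • w := by rw [hp]; module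
    rw [e1] at this
    rw [e2]
    simp only [smul_eq_mul] at this
    linarith
  have hopen : IsOpen {z : Euc N × Euc N | h (p₀ + (1/2 : ℝ) • z.2) - h p₀ <
      h (z.1 - x) - h ((z.1 - x) - (1/2 : ℝ) • z.2)} :=
    isOpen_lt (by fun_prop) (by fun_prop)
  obtain ⟨U, V, hU, hV, hyU, hwV, hUV⟩ := isOpen_prod_iff.1 hopen y₁ w hgap
  obtain ⟨b, hbB, hyb, hbU⟩ := hBb.exists_subset_of_mem_open hyU hU
  obtain ⟨r, hr, hrV⟩ := Metric.isOpen_iff.1 hV w hwV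
  set r' := r / 2 with hr'
  have hr'0 : 0 < r' := by positivity
  obtain ⟨K, hK⟩ := exists_nat_ge (‖w‖ / r')
  have hKw : ‖w‖ ≤ K * r' := by rwa [div_le_iff₀ hr'0] at hK
  set ε : ℕ → ℝ := fun n => 1 / ((n : ℝ) + 1) with hε
  have hε0 : ∀ n, 0 < ε n := fun n => by positivity
  have hlim : Filter.Tendsto ε Filter.atTop (nhds 0) := tendsto_one_div_add_atTop_nhds_zero_nat
  have ht := hx b hbB K ⟨y₁, hyb, h1⟩ (fun n => x - ε n • w) (fun n => ε n * r')
    (tendsto_nhdsWithin_iff.2 ⟨by simpa using hlim.mul_const r',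
      Filter.Eventually.of_forall fun n => mul_pos (hε0 n) hr'0⟩)
    (Filter.Eventually.of_forall fun n => by
      simp only [mem_closedBall, dist_eq_norm, sub_sub_cancel, norm_smul, Real.norm_eq_abs,
        abs_of_pos (hε0 n)]
      calc ε n * ‖w‖ ≤ ε n * (K * r') := mul_le_mul_of_nonneg_left hKw (hε0 n).le
        _ = K * (ε n * r') := by ring)
  have hev := ht.eventually (lt_mem_nhds (zero_lt_one))
  have hev2 : ∀ᶠ n in Filter.atTop, ε n < 1/2 := hlim.eventually (gt_mem_nhds (by norm_num))
  obtain ⟨n, hn, hn2⟩ := (hev.and hev2).exists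
  have hne2 : (E b ∩ closedBall (x - ε n • w) (ε n * r')).Nonempty := by
    by_contra hempty
    rw [not_nonempty_iff_eq_empty] at hempty
    rw [hempty] at hn
    simp at hn
  obtain ⟨x', ⟨y', hy'b, hx'Γ⟩, hx'b⟩ := hne2
  set e := ε n with he
  have he0 : 0 < e := hε0 n
  set w' := e⁻¹ • (x - x') with hw'
  have hx' : x' = x - e • w' := by
    rw [hw', smul_smul, mul_inv_cancel₀ he0.ne', one_smul]; abel
  have hw'V : w' ∈ V := by
    apply hrV
    rw [mem_ball, dist_eq_norm]
    rw [mem_closedBall, dist_eq_norm, hx'] at hx'b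
    have e3 : x - e • w' - (x - e • w) = -(e • (w' - w)) := by module
    rw [e3, norm_neg, norm_smul, Real.norm_eq_abs, abs_of_pos he0] at hx'b
    have := le_of_mul_le_mul_left hx'b he0
    linarith
  have hG : h (p₀ + (1/2 : ℝ) • w') - h p₀ <
      h (y' - x) - h ((y' - x) - (1/2 : ℝ) • w') := hUV (⟨hbU hy'b, hw'V⟩ : (y', w') ∈ U ×ˢ V)
  have hmono := hΓ _ h0 _ hx'Γ
  simp only at hmono
  have hc := hconv.convexOn
  -- upper slope bound at `p₀`
  have i1 : h (y₀ - x') ≤ (1 - 2 * e) * h p₀ + (2 * e) * h (p₀ + (1/2 : ℝ) • w') := by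
    have := hc.2 (mem_univ p₀) (mem_univ (p₀ + (1/2 : ℝ) • w')) 
      (show 0 ≤ 1 - 2 * e by linarith) (show 0 ≤ 2 * e by linarith) (by ring)
    have e4 : (1 - 2 * e) • p₀ + (2 * e) • (p₀ + (1/2 : ℝ) • w') = y₀ - x' := by
      rw [hx', hp₀]; module
    rwa [e4] at this
  -- lower slope bound at the other point
  have i2 : (1 + 2 * e) * h (y' - x) ≤ h (y' - x') + (2 * e) * h ((y' - x) - (1/2 : ℝ) • w') := by
    have hpos : 0 < 1 + 2 * e := by linarith
    have := hc.2 (mem_univ (y' - x')) (mem_univ ((y' - x) - (1/2 : ℝ) • w'))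
      (show 0 ≤ 1 / (1 + 2 * e) by positivity)
      (show 0 ≤ 2 * e / (1 + 2 * e) by positivity) (by field_simp)
    have e5 : (1 / (1 + 2 * e)) • (y' - x') + (2 * e / (1 + 2 * e)) •
        ((y' - x) - (1/2 : ℝ) • w') = y' - x := by
      have e6 : y' - x' = (y' - x) + e • w' := by rw [hx']; abel
      have e7 : 2 * e / (1 + 2 * e) = 1 - 1 / (1 + 2 * e) := by field_simp; ring
      have e8 : (1 / (1 + 2 * e)) * e = (2 * e / (1 + 2 * e)) * (1/2) := by field_simp
      rw [e6, smul_add, smul_sub, smul_smul, smul_smul, e8, e7]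
      module
    rw [e5] at this
    simp only [smul_eq_mul] at this
    calc (1 + 2 * e) * h (y' - x) ≤ (1 + 2 * e) * (1 / (1 + 2 * e) * h (y' - x') +
          2 * e / (1 + 2 * e) * h ((y' - x) - (1/2 : ℝ) • w')) :=
          mul_le_mul_of_nonneg_left this hpos.le
      _ = _ := by field_simp
  nlinarith [mul_lt_mul_of_pos_left hG (by linarith : 0 < 2 * e)]

open ProbabilityTheory in
/-- A plan with a.e. trivial fibres is induced by a map. -/
theorem induced_of_fiber {N : ℕ} {μ : Measure (Euc N)} [IsProbabilityMeasure μ]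
    {π : Measure (Euc N × Euc N)} [IsProbabilityMeasure π] (hfst : π.map Prod.fst = μ)
    {Γ : Set (Euc N × Euc N)} (hπΓ : ∀ᵐ p ∂π, p ∈ Γ)
    (hΓ : ∀ᵐ x ∂μ, ∀ y₀ y₁, (x, y₀) ∈ Γ → (x, y₁) ∈ Γ → y₀ = y₁) :
    ∃ T : Euc N → Euc N, Measurable T ∧ π = μ.map (fun x => (x, T x)) := by
  have hfst' : π.fst = μ := hfst
  have hdis : μ ⊗ₘ π.condKernel = π := by rw [← hfst']; exact π.disintegrate π.condKernel
  set T : Euc N → Euc N := fun x => ∫ y, y ∂(π.condKernel x) with hT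
  have hTm : Measurable T := by
    have : StronglyMeasurable T :=
      StronglyMeasurable.integral_kernel (f := fun y => y) (κ := π.condKernel)
        stronglyMeasurable_id
    exact this.measurable
  refine ⟨T, hTm, ?_⟩
  have hae : ∀ᵐ x ∂μ, ∀ᵐ y ∂(π.condKernel x), (x, y) ∈ Γ := by
    apply Measure.ae_ae_of_ae_compProd
    rw [hdis]; exact hπΓ
  have hker : π.condKernel =ᵐ[μ] Kernel.deterministic T hTm := by
    filter_upwards [hae, hΓ] with x hx1 hx2
    obtain ⟨y, hy⟩ := hx1.exists
    have hy2 : ∀ᵐ z ∂(π.condKernel x), z = y := by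
      filter_upwards [hx1] with z hz using hx2 _ _ hz hy
    have hTx : T x = y := by
      rw [hT]
      simp only
      rw [integral_congr_ae (g := fun _ => y) hy2]
      simp
    rw [Kernel.deterministic_apply, hTx]
    have h1 : (π.condKernel x).map id = (π.condKernel x).map (fun _ => y) :=
      Measure.map_congr hy2
    rw [Measure.map_id, Measure.map_const] at h1
    rw [h1]; simp
  conv_lhs => rw [← hdis]
  rw [Measure.compProd_congr hker, Measure.compProd_deterministic]

theorem strictlyConvex_unique_optimal_map {N : ℕ} (h : Euc N → ℝ)
    (hconv : StrictConvexOn ℝ Set.univ h) (hnonneg : ∀ x, 0 ≤ h x)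
    (μ ν : Measure (Euc N)) [IsProbabilityMeasure μ] [IsProbabilityMeasure ν]
    (hac : μ ≪ volume)
    (hfin : minCost (fun x y => h (y - x)) μ ν ≠ ⊤) :
    ∃ π, IsOptimalPlan (fun x y => h (y - x)) μ ν π ∧
      (∀ π', IsOptimalPlan (fun x y => h (y - x)) μ ν π' → π' = π) ∧
      InducedByMap μ π := by
  have hcont : Continuous h := by
    rw [← continuousOn_univ]
    exact hconv.convexOn.continuousOn isOpen_univ
  have hc : Continuous fun p : Euc N × Euc N => h (p.2 - p.1) :=
    hcont.comp (continuous_snd.sub continuous_fst)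
  set c : Euc N → Euc N → ℝ := fun x y => h (y - x) with hcdef
  have hmap : ∀ π, IsOptimalPlan c μ ν π →
      ∃ T : Euc N → Euc N, Measurable T ∧ π = μ.map (fun x => (x, T x)) := by
    intro π hπ
    have := hπ.1.1
    refine induced_of_fiber hπ.1.2.1 (Γ := π.support) Measure.support_mem_ae ?_
    refine hac.ae_le (ae_fiber_subsingleton hconv hcont ?_)
    intro p hp q hq
    exact support_monotone (c := c) hc (fun x y => hnonneg _) hfin hπ hp hq
  obtain ⟨π, hπ⟩ := exists_optimalPlan (c := c) hc μ ν
  refine ⟨π, hπ, ?_, ?_⟩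
  · intro π' hπ'
    have hk1 : (2⁻¹ : ℝ≥0∞) + 2⁻¹ = 1 := ENNReal.inv_two_add_inv_two
    set ρ : Measure (Euc N × Euc N) := (2⁻¹ : ℝ≥0∞) • π + (2⁻¹ : ℝ≥0∞) • π' with hρ
    have := hπ.1.1
    have := hπ'.1.1
    have hρopt : IsOptimalPlan c μ ν ρ := by
      refine ⟨⟨⟨?_⟩, ?_, ?_⟩, ?_⟩
      · simp [hρ, hk1]
      · rw [hρ, Measure.map_add _ _ measurable_fst, Measure.map_smul, Measure.map_smul,
          hπ.1.2.1, hπ'.1.2.1, ← add_smul, hk1, one_smul]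
      · rw [hρ, Measure.map_add _ _ measurable_snd, Measure.map_smul, Measure.map_smul,
          hπ.1.2.2, hπ'.1.2.2, ← add_smul, hk1, one_smul]
      · have h1 := hπ.2
        have h2 := hπ'.2
        simp only [planCost] at h1 h2 ⊢
        rw [hρ, lintegral_add_measure, lintegral_smul_measure, lintegral_smul_measure, h1, h2,
          smul_eq_mul, ← add_mul, hk1, one_mul]
    obtain ⟨T, hT, hρT⟩ := hmap ρ hρopt
    have hae : ∀ᵐ p ∂ρ, p.2 = T p.1 := by
      rw [hρT]
      have hm : MeasurableSet {p : Euc N × Euc N | p.2 = T p.1} :=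
        measurableSet_eq_fun measurable_snd (hT.comp measurable_fst)
      rw [ae_map_iff (by fun_prop) hm]
      exact Filter.Eventually.of_forall fun x => rfl
    have key : ∀ τ : Measure (Euc N × Euc N), τ.map Prod.fst = μ → (∀ᵐ p ∂τ, p.2 = T p.1) →
        τ = μ.map (fun x => (x, T x)) := by
      intro τ h1 h2
      rw [← h1, Measure.map_map (by fun_prop) measurable_fst]
      conv_lhs => rw [← Measure.map_id (μ := τ)]
      apply Measure.map_congr
      filter_upwards [h2] with p hp
      exact Prod.ext rfl hp
    rw [hρ, ae_add_measure_iff] at hae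
    rw [key π hπ.1.2.1 ((Measure.absolutelyContinuous_smul (by simp)).ae_le hae.1), key π' hπ'.1.2.1 ((Measure.absolutelyContinuous_smul (by simp)).ae_le hae.2)]
  · obtain ⟨T, hT, h1⟩ := hmap π hπ
    exact ⟨T, hT.aemeasurable, h1⟩
end
end

section
/- Let ‖·‖ be a strictly convex norm on ℝ^N and let 1 < p < ∞. Consider the cost c(x,y) = ‖y − x‖^p, and let μ, ν be Borel probability measures on ℝ^N with finite p-th order moments such that μ is absolutely continuous with respect to Lebesgue measure. Then the set of optimal transport plans from μ to ν has a unique element, and this unique optimal plan is induced by a map. -/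
open MeasureTheory Metric Set
open scoped ENNReal

noncomputable section

open Filter Topology ProbabilityTheory
open scoped NNReal

/-- Strict midpoint convexity of `n ^ p`. -/
lemma aux_norm_facts {N : ℕ} (n : Euc N → ℝ)
    (hn0 : ∀ x, n x = 0 ↔ x = 0)
    (hhom : ∀ (a : ℝ) (x : Euc N), n (a • x) = |a| * n x)
    (htri : ∀ x y : Euc N, n (x + y) ≤ n x + n y)
    (hstrict : ∀ x y : Euc N, ¬ SameRay ℝ x y →
      ∀ t ∈ Set.Ioo (0 : ℝ) 1, n (t • x + (1 - t) • y) < t * n x + (1 - t) * n y)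
    (p : ℝ) (hp : 1 < p) :
    (∀ x, 0 ≤ n x) ∧ Continuous n ∧ ConvexOn ℝ univ (fun x => n x ^ p) ∧
    ∀ a b, a ≠ b → 2 * n ((1/2 : ℝ) • a + (1/2 : ℝ) • b) ^ p < n a ^ p + n b ^ p := by
  have hnn : ∀ x, 0 ≤ n x := by
    intro x
    have h1 := htri x ((-1 : ℝ) • x)
    rw [hhom] at h1
    have h2 : n (x + (-1 : ℝ) • x) = 0 := (hn0 _).2 (by simp)
    rw [h2] at h1
    norm_num at h1
    linarith
  have hconv : ConvexOn ℝ univ n := by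
    refine ⟨convex_univ, ?_⟩
    intro x _ y _ a b ha hb _
    refine (htri _ _).trans ?_
    rw [hhom, hhom, abs_of_nonneg ha, abs_of_nonneg hb]
    simp
  have hrp := strictConvexOn_rpow hp
  refine ⟨hnn, hconv.locallyLipschitz.continuous, ?_, ?_⟩
  · refine ⟨convex_univ, ?_⟩
    intro x hx y hy a b ha hb hab
    have h1 := hconv.2 hx hy ha hb hab
    refine (Real.rpow_le_rpow (hnn _) h1 (by linarith)).trans ?_
    exact hrp.convexOn.2 (hnn x) (hnn y) ha hb hab
  · intro a b hab
    by_cases hr : SameRay ℝ a b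
    · have hne : n a ≠ n b := by
        intro he
        obtain ⟨r, s, hr0, hs0, hrs, h1, h2⟩ := hr.exists_eq_smul_add
        have h3 : r * n (a + b) = s * n (a + b) := by
          have e1 : n a = r * n (a + b) := by
            conv_lhs => rw [h1]
            rw [hhom, abs_of_nonneg hr0]
          have e2 : n b = s * n (a + b) := by
            conv_lhs => rw [h2]
            rw [hhom, abs_of_nonneg hs0]
          rw [← e1, ← e2, he]
        rcases mul_eq_mul_right_iff.1 h3 with h | h
        · exact hab (h1.trans ((congrArg (fun u : ℝ => u • (a + b)) h).trans h2.symm))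
        · rw [hn0] at h
          rw [h, smul_zero] at h1 h2
          exact hab (h1.trans h2.symm)
      have h1 := hconv.2 (mem_univ a) (mem_univ b) (by norm_num : (0:ℝ) ≤ 1/2)
        (by norm_num : (0:ℝ) ≤ 1/2) (by norm_num)
      have h2 := hrp.2 (hnn a) (hnn b) hne (by norm_num : (0:ℝ) < 1/2)
        (by norm_num : (0:ℝ) < 1/2) (by norm_num)
      have h3 := Real.rpow_le_rpow (hnn _) h1 (by linarith : 0 ≤ p)
      simp only [smul_eq_mul] at h1 h2 h3
      linarith
    · have h1 := hstrict a b hr (1/2) (by norm_num)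
      rw [show (1 : ℝ) - 1/2 = 1/2 by norm_num] at h1
      have h2 := hrp.convexOn.2 (hnn a) (hnn b) (by norm_num : (0:ℝ) ≤ 1/2)
        (by norm_num : (0:ℝ) ≤ 1/2) (by norm_num)
      have h3 := Real.rpow_lt_rpow (hnn _) h1 (by linarith : 0 < p)
      simp only [smul_eq_mul] at h1 h2 h3
      linarith

/-- Existence of optimal plans for continuous costs. -/
lemma aux_exists_optimal {N : ℕ} (c : Euc N → Euc N → ℝ)
    (hc : Continuous (fun z : Euc N × Euc N => c z.1 z.2))
    (μ ν : Measure (Euc N)) [IsProbabilityMeasure μ] [IsProbabilityMeasure ν] :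
    ∃ π, IsOptimalPlan c μ ν π := by
  let S : Set (ProbabilityMeasure (Euc N × Euc N)) := {π | IsCoupling μ ν (π : Measure _)}
  have hSne : S.Nonempty := ⟨⟨μ.prod ν, inferInstance⟩, by
    refine ⟨by simpa using (inferInstance : IsProbabilityMeasure (μ.prod ν)), ?_, ?_⟩ <;> simp⟩
  let Pμ : ProbabilityMeasure (Euc N) := ⟨μ, inferInstance⟩
  let Pν : ProbabilityMeasure (Euc N) := ⟨ν, inferInstance⟩
  have hScl : IsClosed S := by
    have h1 := ProbabilityMeasure.continuous_map (continuous_fst : Continuous (Prod.fst : Euc N × Euc N → Euc N))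
    have h2 := ProbabilityMeasure.continuous_map (continuous_snd : Continuous (Prod.snd : Euc N × Euc N → Euc N))
    have h3 := (isClosed_singleton (x := Pμ)).preimage h1
    have h4 := (isClosed_singleton (x := Pν)).preimage h2
    convert h3.inter h4 using 1
    ext π
    simp only [S, IsCoupling, mem_ofPred_eq, mem_inter_iff, mem_preimage, mem_singleton_iff]
    constructor
    · rintro ⟨_, h, h'⟩; exact ⟨Subtype.ext h, Subtype.ext h'⟩
    · rintro ⟨h, h'⟩; exact ⟨inferInstance, congrArg Subtype.val h, congrArg Subtype.val h'⟩
  have hScpt : IsCompact S := by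
    rw [← hScl.closure_eq]
    apply isCompact_closure_of_isTightMeasureSet
    apply IsTightMeasureSet.prodMk
    · refine (isTightMeasureSet_singleton (μ := μ)).subset ?_
      rintro _ ⟨_, ⟨π, hπ, rfl⟩, rfl⟩
      exact hπ.2.1
    · refine (isTightMeasureSet_singleton (μ := ν)).subset ?_
      rintro _ ⟨_, ⟨π, hπ, rfl⟩, rfl⟩
      exact hπ.2.2
  have hlsc : LowerSemicontinuous
      (fun π : ProbabilityMeasure (Euc N × Euc N) => planCost c (π : Measure _)) := by
    have key : ∀ π : ProbabilityMeasure (Euc N × Euc N), planCost c (π : Measure _) =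
        ⨆ k : ℕ, ∫⁻ z : Euc N × Euc N, ((min (c z.1 z.2).toNNReal (k : ℝ≥0) : ℝ≥0) : ℝ≥0∞) ∂(π : Measure (Euc N × Euc N)) := by
      intro π
      rw [← lintegral_iSup]
      · unfold planCost
        congr 1
        ext z
        apply le_antisymm
        · obtain ⟨k, hk⟩ := exists_nat_ge (c z.1 z.2).toNNReal
          refine le_iSup_of_le k ?_
          rw [min_eq_left hk]
          rfl
        · refine iSup_le fun k => ?_
          exact ENNReal.coe_le_coe.2 (min_le_left _ _)
      · intro k
        exact ((hc.measurable.real_toNNReal).min measurable_const).coe_nnreal_ennreal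
      · intro k l hkl z
        exact ENNReal.coe_le_coe.2 (min_le_min_left _ (by exact_mod_cast hkl))
    simp_rw [key]
    refine lowerSemicontinuous_iSup fun k => Continuous.lowerSemicontinuous ?_
    let f : BoundedContinuousFunction (Euc N × Euc N) ℝ≥0 :=
      BoundedContinuousFunction.mkOfBound ⟨fun z => min (c z.1 z.2).toNNReal (k : ℝ≥0),
        (continuous_real_toNNReal.comp hc).min continuous_const⟩ k (by
          intro x y
          rw [NNReal.dist_eq]
          simp only [ContinuousMap.coe_mk]
          have h1 : ((min (c x.1 x.2).toNNReal (k : ℝ≥0) : ℝ≥0) : ℝ) ≤ k := by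
            exact_mod_cast min_le_right _ _
          have h2 : ((min (c y.1 y.2).toNNReal (k : ℝ≥0) : ℝ≥0) : ℝ) ≤ k := by
            exact_mod_cast min_le_right _ _
          have h3 := (min (c x.1 x.2).toNNReal (k : ℝ≥0)).2
          have h4 := (min (c y.1 y.2).toNNReal (k : ℝ≥0)).2
          rw [abs_le]
          constructor <;> linarith)
    exact ProbabilityMeasure.continuous_lintegral_boundedContinuousFunction f
  obtain ⟨π, hπ, hmin⟩ := LowerSemicontinuousOn.exists_isMinOn hSne hScpt (hlsc.lowerSemicontinuousOn S)
  refine ⟨π, hπ, le_antisymm ?_ ?_⟩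
  · refine le_iInf₂ fun π' hπ' => ?_
    have := hπ'.1
    exact hmin (show (⟨π', hπ'.1⟩ : ProbabilityMeasure _) ∈ S from hπ')
  · exact iInf₂_le (π : Measure (Euc N × Euc N)) (show _ ∈ {π | IsCoupling μ ν π} from hπ)

/-- Two-point `c`-monotonicity of the support of an optimal plan. -/
lemma aux_monotone {N : ℕ} (c : Euc N → Euc N → ℝ) (hc0 : ∀ x y, 0 ≤ c x y)
    (hc : Continuous (fun z : Euc N × Euc N => c z.1 z.2))
    (μ ν : Measure (Euc N)) (π : Measure (Euc N × Euc N))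
    (hπ : IsOptimalPlan c μ ν π) (hfin : planCost c π < ⊤) :
    ∀ z ∈ π.support, ∀ w ∈ π.support, c z.1 z.2 + c w.1 w.2 ≤ c z.1 w.2 + c w.1 z.2 := by
  obtain ⟨⟨hprob, hm1, hm2⟩, hopt⟩ := hπ
  let B : Set ((Euc N × Euc N) × (Euc N × Euc N)) := {q | c q.1.1 q.2.2 + c q.2.1 q.1.2 < c q.1.1 q.1.2 + c q.2.1 q.2.2}
  have hc1 : Continuous (fun q : (Euc N × Euc N) × (Euc N × Euc N) => c q.1.1 q.1.2) := hc.comp continuous_fst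
  have hc2 : Continuous (fun q : (Euc N × Euc N) × (Euc N × Euc N) => c q.2.1 q.2.2) := hc.comp continuous_snd
  have hc3 : Continuous (fun q : (Euc N × Euc N) × (Euc N × Euc N) => c q.1.1 q.2.2) :=
    hc.comp (by fun_prop : Continuous (fun q : (Euc N × Euc N) × (Euc N × Euc N) => (q.1.1, q.2.2)))
  have hc4 : Continuous (fun q : (Euc N × Euc N) × (Euc N × Euc N) => c q.2.1 q.1.2) :=
    hc.comp (by fun_prop : Continuous (fun q : (Euc N × Euc N) × (Euc N × Euc N) => (q.2.1, q.1.2)))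
  have hBo : IsOpen B := isOpen_lt (hc3.add hc4) (hc1.add hc2)
  have hBm : MeasurableSet B := hBo.measurableSet
  let P := π.prod π
  have hswap : MeasurePreserving (Prod.swap : (Euc N × Euc N) × (Euc N × Euc N) → (Euc N × Euc N) × (Euc N × Euc N)) P P := Measure.measurePreserving_swap
  have hsw : ∀ f : (Euc N × Euc N) × (Euc N × Euc N) → ℝ≥0∞, Measurable f →
      ∫⁻ q in B, f q ∂P = ∫⁻ q in B, f q.swap ∂P := by
    intro f hf
    have h1 := hswap.setLIntegral_comp_preimage hBm hf
    rw [← h1]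
    have : Prod.swap ⁻¹' B = B := by
      ext q
      simp only [B, mem_preimage, mem_ofPred_eq, Prod.fst_swap, Prod.snd_swap]
      constructor <;> intro h <;> linarith
    rw [this]
  -- the swapped plan
  classical
  let S : (Euc N × Euc N) × (Euc N × Euc N) → Euc N × Euc N := fun q => (q.1.1, if q ∈ B then q.2.2 else q.1.2)
  have hS : Measurable S := by
    refine (measurable_fst.comp measurable_fst).prodMk ?_
    exact Measurable.ite hBm (by fun_prop) (by fun_prop)
  let π' := P.map S
  have hfst : ∀ g : Euc N × Euc N → ℝ≥0∞, Measurable g → ∫⁻ q, g q.1 ∂P = ∫⁻ z, g z ∂π := by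
    intro g hg
    have := (measurePreserving_fst (μ := π) (ν := π)).lintegral_comp hg
    simpa using this
  have hcoup : IsCoupling μ ν π' := by
    refine ⟨Measure.isProbabilityMeasure_map hS.aemeasurable, ?_, ?_⟩
    · rw [Measure.map_map measurable_fst hS]
      rw [← hm1]
      have : (Prod.fst ∘ S) = (Prod.fst : Euc N × Euc N → Euc N) ∘ (Prod.fst : (Euc N × Euc N) × (Euc N × Euc N) → Euc N × Euc N) := rfl
      rw [this, ← Measure.map_map measurable_fst measurable_fst]
      congr 1
      exact measurePreserving_fst.map_eq
    · refine Measure.ext_of_lintegral _ fun f hf => ?_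
      rw [← hm2, lintegral_map hf measurable_snd, lintegral_map hf measurable_snd,
        lintegral_map (f := fun z : Euc N × Euc N => f z.2) (hf.comp measurable_snd) hS]
      rw [← hfst (fun z => f z.2) (hf.comp measurable_snd)]
      rw [← lintegral_add_compl _ hBm, ← lintegral_add_compl (fun q : (Euc N × Euc N) × (Euc N × Euc N) => f q.1.2) hBm]
      congr 1
      · rw [hsw (fun q => f q.1.2) (by fun_prop)]
        refine setLIntegral_congr_fun hBm ?_
        intro q hq
        simp [S, hq]
      · refine setLIntegral_congr_fun hBm.compl ?_
        intro q hq
        have hq' : q ∉ B := hq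
        simp [S, hq']
  have hm : ∀ g : (Euc N × Euc N) × (Euc N × Euc N) → ℝ, Continuous g → Measurable (fun q => ENNReal.ofReal (g q)) :=
    fun g hg => hg.measurable.ennreal_ofReal
  have hle : planCost c π ≤ planCost c π' := by
    rw [hopt]
    exact iInf₂_le π' hcoup
  have e1 : planCost c π' = ∫⁻ q in B, ENNReal.ofReal (c q.1.1 q.2.2) ∂P
      + ∫⁻ q in Bᶜ, ENNReal.ofReal (c q.1.1 q.1.2) ∂P := by
    unfold planCost
    rw [lintegral_map (hc.measurable.ennreal_ofReal) hS, ← lintegral_add_compl _ hBm]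
    congr 1
    · refine setLIntegral_congr_fun hBm ?_
      intro q hq
      simp [S, hq]
    · refine setLIntegral_congr_fun hBm.compl ?_
      intro q hq
      have hq' : q ∉ B := hq
      simp [S, hq']
  have e2 : planCost c π = ∫⁻ q in B, ENNReal.ofReal (c q.1.1 q.1.2) ∂P
      + ∫⁻ q in Bᶜ, ENNReal.ofReal (c q.1.1 q.1.2) ∂P := by
    unfold planCost
    rw [← hfst (fun z => ENNReal.ofReal (c z.1 z.2)) hc.measurable.ennreal_ofReal,
      ← lintegral_add_compl _ hBm]
  rw [e2] at hfin
  have hf1 : ∫⁻ q in B, ENNReal.ofReal (c q.1.1 q.1.2) ∂P ≠ ⊤ :=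
    ((le_add_right le_rfl).trans_lt hfin).ne
  have hf2 : ∫⁻ q in Bᶜ, ENNReal.ofReal (c q.1.1 q.1.2) ∂P ≠ ⊤ :=
    ((le_add_left le_rfl).trans_lt hfin).ne
  rw [e1, e2] at hle
  have hle2 : ∫⁻ q in B, ENNReal.ofReal (c q.1.1 q.1.2) ∂P ≤
      ∫⁻ q in B, ENNReal.ofReal (c q.1.1 q.2.2) ∂P :=
    (ENNReal.add_le_add_iff_right hf2).1 hle
  have s1 := hsw (fun q => ENNReal.ofReal (c q.1.1 q.1.2)) (hm _ hc1)
  have s2 := hsw (fun q => ENNReal.ofReal (c q.1.1 q.2.2)) (hm _ hc3)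
  simp only [Prod.fst_swap, Prod.snd_swap] at s1 s2
  have hsum : ∫⁻ q in B, ENNReal.ofReal (c q.1.1 q.1.2 + c q.2.1 q.2.2) ∂P ≤
      ∫⁻ q in B, ENNReal.ofReal (c q.1.1 q.2.2 + c q.2.1 q.1.2) ∂P := by
    simp_rw [ENNReal.ofReal_add (hc0 _ _) (hc0 _ _)]
    rw [lintegral_add_left (hm _ hc1), lintegral_add_left (hm _ hc3), ← s1, ← s2]
    exact add_le_add hle2 hle2
  have hPB : P B = 0 := by
    by_contra hne
    have hlt : ∫⁻ q in B, ENNReal.ofReal (c q.1.1 q.2.2 + c q.2.1 q.1.2) ∂P <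
        ∫⁻ q in B, ENNReal.ofReal (c q.1.1 q.1.2 + c q.2.1 q.2.2) ∂P := by
      refine setLIntegral_strict_mono hBm hne (hm _ (hc1.add hc2)) ?_ ?_
      · refine ne_top_of_le_ne_top ?_ (setLIntegral_mono (hm _ (hc1.add hc2))
          (g := fun q => ENNReal.ofReal (c q.1.1 q.1.2 + c q.2.1 q.2.2)) ?_)
        · simp_rw [ENNReal.ofReal_add (hc0 _ _) (hc0 _ _)]
          rw [lintegral_add_left (hm _ hc1), ← s1]
          exact ENNReal.add_ne_top.2 ⟨hf1, hf1⟩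
        · intro q hq
          exact ENNReal.ofReal_le_ofReal (le_of_lt hq)
      · refine ae_of_all _ fun q hq => ?_
        have hq' : c q.1.1 q.2.2 + c q.2.1 q.1.2 < c q.1.1 q.1.2 + c q.2.1 q.2.2 := hq
        refine (ENNReal.ofReal_lt_ofReal_iff ?_).2 hq'
        have := hc0 q.1.1 q.2.2
        have := hc0 q.2.1 q.1.2
        linarith
    exact absurd hsum (not_le.2 hlt)
  intro z hz w hw
  by_contra hcon
  have hzw : (z, w) ∈ B := not_le.1 hcon
  obtain ⟨U, hU, V, hV, hUV⟩ := mem_nhds_prod_iff.1 (hBo.mem_nhds hzw)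
  have h1 := (Measure.mem_support_iff_forall z).1 hz U hU
  have h2 := (Measure.mem_support_iff_forall w).1 hw V hV
  have h3 : P (U ×ˢ V) = 0 := measure_mono_null hUV hPB
  rw [Measure.prod_prod] at h3
  rcases mul_eq_zero.1 h3 with h | h
  · exact h1.ne' h
  · exact h2.ne' h

/-- A two-point monotone set is a graph above almost every point. -/
lemma aux_graph {N : ℕ} (h : Euc N → ℝ) (hcont : Continuous h) (hconv : ConvexOn ℝ univ h)
    (hmid : ∀ a b, a ≠ b → 2 * h ((1/2 : ℝ) • a + (1/2 : ℝ) • b) < h a + h b)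
    (Γ : Set (Euc N × Euc N))
    (hΓ : ∀ z ∈ Γ, ∀ w ∈ Γ, h (z.2 - z.1) + h (w.2 - w.1) ≤ h (w.2 - z.1) + h (z.2 - w.1)) :
    ∀ᵐ x ∂(volume : Measure (Euc N)), ∀ y₁ y₂, (x, y₁) ∈ Γ → (x, y₂) ∈ Γ → y₁ = y₂ := by
  obtain ⟨b, hbc, -, hb⟩ := TopologicalSpace.exists_countable_basis (Euc N)
  let A : Set (Euc N) → Set (Euc N) := fun U => {x | ∃ y ∈ U, (x, y) ∈ Γ}
  have hdens : ∀ᵐ x ∂(volume : Measure (Euc N)), ∀ U ∈ b, x ∈ A U →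
      Tendsto (fun r => volume (A U ∩ closedBall x r) / volume (closedBall x r)) (𝓝[>] 0) (𝓝 1) := by
    rw [ae_ball_iff hbc]
    intro U hU
    have h1 := Besicovitch.ae_tendsto_measure_inter_div (volume : Measure (Euc N)) (A U)
    exact ae_imp_of_ae_restrict h1
  filter_upwards [hdens] with x hx y₁ y₂ h1 h2
  by_contra hne
  let W : Set (Euc N × Euc N) := {q | h (y₂ - x - (1/2 : ℝ) • q.2) + h (q.1 - x + (1/2 : ℝ) • q.2)
    < h (y₂ - x) + h (q.1 - x)}
  have hWo : IsOpen W := isOpen_lt (by fun_prop) (by fun_prop)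
  have hW : (y₁, y₂ - y₁) ∈ W := by
    have := hmid (y₂ - x) (y₁ - x) (fun h => hne (sub_left_injective h).symm)
    have e1 : y₂ - x - (1/2 : ℝ) • (y₂ - y₁) = (1/2 : ℝ) • (y₂ - x) + (1/2 : ℝ) • (y₁ - x) := by
      module
    have e2 : y₁ - x + (1/2 : ℝ) • (y₂ - y₁) = (1/2 : ℝ) • (y₂ - x) + (1/2 : ℝ) • (y₁ - x) := by
      module
    show h (y₂ - x - (1/2 : ℝ) • (y₂ - y₁)) + h (y₁ - x + (1/2 : ℝ) • (y₂ - y₁)) < _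
    rw [e1, e2]
    dsimp only
    linarith
  obtain ⟨U', hU', V', hV', hUV⟩ := mem_nhds_prod_iff.1 (hWo.mem_nhds hW)
  obtain ⟨U, hUb, hyU, hUU⟩ := hb.mem_nhds_iff.1 hU'
  obtain ⟨V, hVV, hVo, hyV⟩ := _root_.mem_nhds_iff.1 hV'
  have hd := hx U hUb ⟨y₁, hyU, h1⟩
  have hev := Measure.eventually_nonempty_inter_smul_of_density_one volume (A U) x hd V
    hVo.measurableSet (hVo.measure_pos volume ⟨_, hyV⟩).ne'
  have hsm : ∀ᶠ r in 𝓝[>] (0 : ℝ), r ∈ Ioo (0 : ℝ) (1/2) :=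
    Ioo_mem_nhdsGT (by norm_num)
  obtain ⟨t, ⟨x', ⟨y', hyU1, hxy1⟩, hxt1⟩, ht0, ht1⟩ := (hev.and hsm).exists
  obtain ⟨x0, hx0, u, hu, rfl⟩ := hxt1
  obtain rfl : x0 = x := hx0
  obtain ⟨w, hw, rfl⟩ := hu
  have hq : (y', w) ∈ W := hUV ⟨hUU hyU1, hVV hw⟩
  have hq' : h (y₂ - x0 - (1/2 : ℝ) • w) + h (y' - x0 + (1/2 : ℝ) • w)
    < h (y₂ - x0) + h (y' - x0) := hq
  have hmono := hΓ _ hxy1 _ h2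
  dsimp only at hmono
  -- slopes
  have c1 : h (y' - x0) ≤ (t / (t + 1/2)) * h (y' - x0 + (1/2 : ℝ) • w)
      + ((1/2) / (t + 1/2)) * h (y' - (x0 + t • w)) := by
    have := hconv.2 (mem_univ (y' - x0 + (1/2 : ℝ) • w)) (mem_univ (y' - (x0 + t • w)))
      (by positivity : 0 ≤ t / (t + 1/2)) (by positivity : 0 ≤ (1/2) / (t + 1/2))
      (by field_simp)
    refine le_trans (le_of_eq ?_) this
    congr 1
    have e : t / (t + 1/2) = 1 - (1/2) / (t + 1/2) := by field_simp; ring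
    have e' : (1/2) / (t + 1/2) * t = (t / (t + 1/2)) * (1/2) := by ring
    rw [← sub_eq_zero]
    have : y' - x0 - ((t / (t + 1/2)) • (y' - x0 + (1/2 : ℝ) • w) + ((1/2) / (t + 1/2)) • (y' - (x0 + t • w)))
      = (1 - t / (t + 1/2) - (1/2) / (t + 1/2)) • (y' - x0)
        + ((1/2) / (t + 1/2) * t - (t / (t + 1/2)) * (1/2)) • w := by module
    rw [this, e', e]; simp
  have c2 : h (y₂ - (x0 + t • w)) ≤ (2 * t) * h (y₂ - x0 - (1/2 : ℝ) • w)
      + (1 - 2 * t) * h (y₂ - x0) := by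
    have := hconv.2 (mem_univ (y₂ - x0 - (1/2 : ℝ) • w)) (mem_univ (y₂ - x0))
      (by positivity : 0 ≤ 2 * t) (by linarith : 0 ≤ 1 - 2 * t) (by ring)
    refine le_trans (le_of_eq ?_) this
    congr 1
    module
  have c1' : (t + 1/2) * h (y' - x0) ≤ t * h (y' - x0 + (1/2 : ℝ) • w)
      + (1/2) * h (y' - (x0 + t • w)) := by
    have h3 := mul_le_mul_of_nonneg_left c1 (by positivity : 0 ≤ t + 1/2)
    refine h3.trans (le_of_eq ?_)
    field_simp
  have := mul_lt_mul_of_pos_left hq' ht0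
  nlinarith

/-- A plan concentrated on an almost everywhere functional set is induced by a map. -/
lemma aux_map {N : ℕ} (μ : Measure (Euc N)) (π : Measure (Euc N × Euc N))
    [IsProbabilityMeasure π] (hm1 : π.map Prod.fst = μ)
    (Γ : Set (Euc N × Euc N)) (hΓ : ∀ᵐ z ∂π, z ∈ Γ)
    (hfun : ∀ᵐ x ∂μ, ∀ y₁ y₂, (x, y₁) ∈ Γ → (x, y₂) ∈ Γ → y₁ = y₂) :
    ∃ T : Euc N → Euc N, Measurable T ∧ (∀ᵐ x ∂μ, (x, T x) ∈ Γ) ∧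
      π = μ.map (fun x => (x, T x)) := by
  let κ := π.condKernel
  have hdis : μ ⊗ₘ κ = π := by
    rw [← hm1]
    exact π.disintegrate κ
  have : IsProbabilityMeasure μ := hm1 ▸ Measure.isProbabilityMeasure_map measurable_fst.aemeasurable
  let T : Euc N → Euc N := fun x => ∫ y, y ∂(κ x)
  have hT : Measurable T := by
    have : StronglyMeasurable T :=
      StronglyMeasurable.integral_kernel (κ := κ) (f := fun y => y) stronglyMeasurable_id
    exact this.measurable
  have hκ : ∀ᵐ x ∂μ, ∀ᵐ y ∂(κ x), (x, y) ∈ Γ := by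
    rw [← hdis] at hΓ
    exact Measure.ae_ae_of_ae_compProd hΓ
  have hdir : ∀ᵐ x ∂μ, (x, T x) ∈ Γ ∧ ∀ᵐ y ∂(κ x), y = T x := by
    filter_upwards [hκ, hfun] with x h1 h2
    obtain ⟨y0, hy0⟩ := h1.exists
    have h3 : ∀ᵐ y ∂(κ x), y = y0 := by
      filter_upwards [h1] with y hy
      exact h2 _ _ hy hy0
    have h4 : T x = y0 := by
      show ∫ y, y ∂(κ x) = y0
      rw [integral_congr_ae h3]
      simp
    rw [h4]
    exact ⟨hy0, h3⟩
  refine ⟨T, hT, hdir.mono fun x hx => hx.1, ?_⟩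
  have h5 : ∀ᵐ z ∂π, z = (z.1, T z.1) := by
    have h6 : ∀ᵐ z ∂(μ ⊗ₘ κ), z = (z.1, T z.1) := by
      rw [Measure.ae_compProd_iff (measurableSet_eq_fun (by fun_prop) (by fun_prop))]
      filter_upwards [hdir] with x hx
      filter_upwards [hx.2] with y hy
      simp [hy]
    rwa [hdis] at h6
  have h7 : π.map id = π.map (fun z => (z.1, T z.1)) := Measure.map_congr h5
  rw [Measure.map_id] at h7
  rw [← hm1, Measure.map_map (by fun_prop) measurable_fst]
  exact h7

theorem strictlyConvexNorm_Lp_unique_optimal_map {N : ℕ} (n : Euc N → ℝ)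
    (hn0 : ∀ x, n x = 0 ↔ x = 0)
    (hhom : ∀ (a : ℝ) (x : Euc N), n (a • x) = |a| * n x)
    (htri : ∀ x y : Euc N, n (x + y) ≤ n x + n y)
    (hstrict : ∀ x y : Euc N, ¬ SameRay ℝ x y →
      ∀ t ∈ Set.Ioo (0 : ℝ) 1, n (t • x + (1 - t) • y) < t * n x + (1 - t) * n y)
    (p : ℝ) (hp : 1 < p)
    (μ ν : Measure (Euc N)) [IsProbabilityMeasure μ] [IsProbabilityMeasure ν]
    (hac : μ ≪ volume)
    (hμmom : ∫⁻ x, ENNReal.ofReal (n x ^ p) ∂μ < ⊤)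
    (hνmom : ∫⁻ x, ENNReal.ofReal (n x ^ p) ∂ν < ⊤) :
    ∃ π, IsOptimalPlan (fun x y => n (y - x) ^ p) μ ν π ∧
      (∀ π', IsOptimalPlan (fun x y => n (y - x) ^ p) μ ν π' → π' = π) ∧
      InducedByMap μ π := by

  obtain ⟨hnn, hncont, hconv, hmid⟩ := aux_norm_facts n hn0 hhom htri hstrict p hp
  have hcont : Continuous (fun x => n x ^ p) := hncont.rpow_const (fun _ => Or.inr (by linarith))
  let c : Euc N → Euc N → ℝ := fun x y => n (y - x) ^ p
  have hc0 : ∀ x y, 0 ≤ c x y := fun x y => Real.rpow_nonneg (hnn _) _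
  have hc : Continuous (fun z : Euc N × Euc N => c z.1 z.2) :=
    hcont.comp (continuous_snd.sub continuous_fst)
  have hmeas : Measurable (fun x => ENNReal.ofReal (n x ^ p)) := hcont.measurable.ennreal_ofReal
  have hneg : ∀ x, n (-x) = n x := by
    intro x
    have := hhom (-1) x
    simpa using this
  -- finite cost
  have hprodc : IsCoupling μ ν (μ.prod ν) := ⟨inferInstance, by simp, by simp⟩
  have hbound : ∀ x y, c x y ≤ 2 ^ p * (n x ^ p + n y ^ p) := by
    intro x y
    have h1 : n (y - x) ≤ 2 * max (n x) (n y) := by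
      have := htri y (-x)
      rw [hneg, ← sub_eq_add_neg] at this
      have := le_max_left (n x) (n y)
      have := le_max_right (n x) (n y)
      linarith
    have h2 := Real.rpow_le_rpow (hnn _) h1 (by linarith : 0 ≤ p)
    rw [Real.mul_rpow (by norm_num) (le_max_of_le_left (hnn x))] at h2
    refine h2.trans (mul_le_mul_of_nonneg_left ?_ (by positivity))
    have h3 := Real.rpow_nonneg (hnn x) p
    have h4 := Real.rpow_nonneg (hnn y) p
    rcases max_choice (n x) (n y) with h | h <;> rw [h] <;> linarith
  have hfin : minCost c μ ν < ⊤ := by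
    refine (iInf₂_le (μ.prod ν) hprodc).trans_lt ?_
    have h1 : planCost c (μ.prod ν) ≤ ∫⁻ z : Euc N × Euc N, ENNReal.ofReal (2 ^ p) *
        (ENNReal.ofReal (n z.1 ^ p) + ENNReal.ofReal (n z.2 ^ p)) ∂(μ.prod ν) := by
      refine lintegral_mono fun z => ?_
      dsimp only
      rw [← ENNReal.ofReal_add (Real.rpow_nonneg (hnn _) _) (Real.rpow_nonneg (hnn _) _),
        ← ENNReal.ofReal_mul (by positivity)]
      exact ENNReal.ofReal_le_ofReal (hbound _ _)
    refine h1.trans_lt ?_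
    have m1 : Measurable (fun z : Euc N × Euc N => ENNReal.ofReal (n z.1 ^ p)) :=
      hmeas.comp measurable_fst
    have m2 : Measurable (fun z : Euc N × Euc N => ENNReal.ofReal (n z.2 ^ p)) :=
      hmeas.comp measurable_snd
    rw [lintegral_const_mul' _ _ ENNReal.ofReal_ne_top, lintegral_add_left m1]
    have h2 : ∫⁻ z : Euc N × Euc N, ENNReal.ofReal (n z.1 ^ p) ∂(μ.prod ν)
        = ∫⁻ x, ENNReal.ofReal (n x ^ p) ∂μ :=
      (measurePreserving_fst (μ := μ) (ν := ν)).lintegral_comp hmeas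
    have h3 : ∫⁻ z : Euc N × Euc N, ENNReal.ofReal (n z.2 ^ p) ∂(μ.prod ν)
        = ∫⁻ x, ENNReal.ofReal (n x ^ p) ∂ν :=
      (measurePreserving_snd (μ := μ) (ν := ν)).lintegral_comp hmeas
    rw [h2, h3]
    exact ENNReal.mul_lt_top ENNReal.ofReal_lt_top (ENNReal.add_lt_top.2 ⟨hμmom, hνmom⟩)
  -- supports of optimal plans are graphs
  have hgraph : ∀ π, IsOptimalPlan c μ ν π →
      ∀ᵐ x ∂μ, ∀ y₁ y₂, (x, y₁) ∈ π.support → (x, y₂) ∈ π.support → y₁ = y₂ := by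
    intro π hπ
    refine hac.ae_le (aux_graph _ hcont hconv hmid π.support ?_)
    intro z hz w hw
    have := aux_monotone c hc0 hc μ ν π hπ (hπ.2 ▸ hfin) z hz w hw
    exact this
  obtain ⟨π, hπ⟩ := aux_exists_optimal c hc μ ν
  refine ⟨π, hπ, ?_, ?_⟩
  · intro π' hπ'
    let ρ : Measure (Euc N × Euc N) := (2⁻¹ : ℝ≥0∞) • π + (2⁻¹ : ℝ≥0∞) • π'
    have hhalf : ∀ a : ℝ≥0∞, 2⁻¹ * a + 2⁻¹ * a = a := by
      intro a
      rw [← add_mul, ENNReal.inv_two_add_inv_two, one_mul]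
    have hhalfm : ∀ m : Measure (Euc N), (2⁻¹ : ℝ≥0∞) • m + (2⁻¹ : ℝ≥0∞) • m = m := by
      intro m
      rw [← add_smul, ENNReal.inv_two_add_inv_two, one_smul]
    have hp1 := hπ.1.1
    have hp2 := hπ'.1.1
    have hρ : IsOptimalPlan c μ ν ρ := by
      refine ⟨⟨⟨?_⟩, ?_, ?_⟩, ?_⟩
      · simp [ρ, ENNReal.inv_two_add_inv_two]
      · simp only [ρ]
        rw [Measure.map_add _ _ measurable_fst, Measure.map_smul, Measure.map_smul,
          hπ.1.2.1, hπ'.1.2.1, hhalfm]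
      · simp only [ρ]
        rw [Measure.map_add _ _ measurable_snd, Measure.map_smul, Measure.map_smul,
          hπ.1.2.2, hπ'.1.2.2, hhalfm]
      · have h1 : planCost c ρ = 2⁻¹ * planCost c π + 2⁻¹ * planCost c π' := by
          simp [planCost, ρ, lintegral_add_measure, lintegral_smul_measure]
        rw [h1, hπ.2, hπ'.2, hhalf]
    have hae : ∀ᵐ z ∂ρ, z ∈ ρ.support := Measure.support_mem_ae
    have hac1 : π ≪ ρ := by
      intro s hs
      simp [ρ] at hs
      exact hs.1
    have hac2 : π' ≪ ρ := by
      intro s hs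
      simp [ρ] at hs
      exact hs.2
    obtain ⟨T, hT, hTΓ, hTπ⟩ := aux_map μ π hπ.1.2.1 ρ.support (hac1.ae_le hae) (hgraph ρ hρ)
    obtain ⟨T', hT', hTΓ', hTπ'⟩ := aux_map μ π' hπ'.1.2.1 ρ.support (hac2.ae_le hae) (hgraph ρ hρ)
    rw [hTπ, hTπ']
    refine Measure.map_congr ?_
    filter_upwards [hTΓ, hTΓ', hgraph ρ hρ] with x h1 h2 h3
    rw [h3 _ _ h1 h2]
  · have hp1 := hπ.1.1
    obtain ⟨T, hT, -, hTπ⟩ := aux_map μ π hπ.1.2.1 π.support Measure.support_mem_ae (hgraph π hπ)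
    exact ⟨T, hT.aemeasurable, hTπ⟩
end
end

section
/- Every strictly convex norm on ℝ^N is a cylinder-like convex function. -/
open MeasureTheory Metric Set
open scoped ENNReal

noncomputable section

/-- A convex function `g : ℝ^N → [0,∞)` is cylinder-like if for every `x̄ ≠ ȳ` with
`g x̄ = g ȳ` there are `ε > 0`, `δ > 0` such that `g (x - ε(x̄ - ȳ)) ≤ g x` on `B_δ(x̄)`
and `g (y + ε(x̄ - ȳ)) ≤ g y` on `B_δ(ȳ)`. -/
def IsCylinderLike {N : ℕ} (g : Euc N → ℝ) : Prop :=
  ∀ xb yb : Euc N, xb ≠ yb → g xb = g yb →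
    ∃ ε > (0 : ℝ), ∃ δ > (0 : ℝ),
      (∀ x ∈ Metric.ball xb δ, g (x - ε • (xb - yb)) ≤ g x) ∧
      (∀ y ∈ Metric.ball yb δ, g (y + ε • (xb - yb)) ≤ g y)

theorem strictlyConvexNorm_isCylinderLike {N : ℕ} (n : Euc N → ℝ)
    (hn0 : ∀ x, n x = 0 ↔ x = 0)
    (hhom : ∀ (a : ℝ) (x : Euc N), n (a • x) = |a| * n x)
    (htri : ∀ x y : Euc N, n (x + y) ≤ n x + n y)
    (hstrict : ∀ x y : Euc N, ¬ SameRay ℝ x y →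
      ∀ t ∈ Set.Ioo (0 : ℝ) 1, n (t • x + (1 - t) • y) < t * n x + (1 - t) * n y) :
    ConvexOn ℝ Set.univ n ∧ (∀ x, 0 ≤ n x) ∧ IsCylinderLike n := by
  have hconv : ConvexOn ℝ Set.univ n := by
    refine ⟨convex_univ, ?_⟩
    intro x _ y _ a b ha hb _
    have h := htri (a • x) (b • y)
    rw [hhom, hhom, abs_of_nonneg ha, abs_of_nonneg hb] at h
    simpa [smul_eq_mul] using h
  have hpos : ∀ x, 0 ≤ n x := by
    intro x
    have h := htri x ((-1 : ℝ) • x)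
    rw [hhom] at h
    have h0 : x + (-1 : ℝ) • x = 0 := by simp
    rw [h0, (hn0 0).2 rfl] at h
    norm_num at h
    linarith
  have hcont : Continuous n := by
    rw [← continuousOn_univ]
    exact hconv.continuousOn isOpen_univ
  -- the key local estimate, with step one half
  have key : ∀ x y : Euc N, x ≠ y → n x = n y →
      ∃ δ > (0 : ℝ), ∀ z ∈ Metric.ball x δ, n (z - (1 / 2 : ℝ) • (x - y)) ≤ n z := by
    intro x y hxy hnxy
    have hray : ¬ SameRay ℝ x y := by
      intro h
      rcases h with h | h | ⟨r, s, hr, hs, h⟩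
      · have hy : y = 0 := (hn0 y).1 (by rw [← hnxy, (hn0 x).2 h])
        exact hxy (h.trans hy.symm)
      · have hx : x = 0 := (hn0 x).1 (by rw [hnxy, (hn0 y).2 h])
        exact hxy (hx.trans h.symm)
      · have h1 : n (r • x) = n (s • y) := by rw [h]
        rw [hhom, hhom, abs_of_pos hr, abs_of_pos hs, hnxy] at h1
        by_cases hy : n y = 0
        · exact hxy (((hn0 x).1 (hnxy.trans hy)).trans ((hn0 y).1 hy).symm)
        · have hrs : r = s := mul_right_cancel₀ hy h1
          subst hrs
          exact hxy (smul_right_injective _ hr.ne' h)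
    have hlt := hstrict x y hray (1 / 2) ⟨by norm_num, by norm_num⟩
    have heq : (1 / 2 : ℝ) • x + (1 - 1 / 2 : ℝ) • y = x - (1 / 2 : ℝ) • (x - y) := by
      module
    rw [heq, ← hnxy] at hlt
    have hlt' : n (x - (1 / 2 : ℝ) • (x - y)) < n x := by linarith
    have hopen : IsOpen {z : Euc N | n (z - (1 / 2 : ℝ) • (x - y)) < n z} :=
      isOpen_lt (hcont.comp (continuous_id.sub continuous_const)) hcont
    obtain ⟨δ, hδ, hsub⟩ := Metric.isOpen_iff.1 hopen x hlt'
    exact ⟨δ, hδ, fun z hz => le_of_lt (hsub hz)⟩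
  refine ⟨hconv, hpos, ?_⟩
  intro x y hxy hnxy
  obtain ⟨δ₁, h₁, k₁⟩ := key x y hxy hnxy
  obtain ⟨δ₂, h₂, k₂⟩ := key y x hxy.symm hnxy.symm
  refine ⟨1 / 2, by norm_num, min δ₁ δ₂, lt_min h₁ h₂, ?_, ?_⟩
  · intro z hz
    exact k₁ z (Metric.ball_subset_ball (min_le_left _ _) hz)
  · intro z hz
    have h := k₂ z (Metric.ball_subset_ball (min_le_right _ _) hz)
    have he : z - (1 / 2 : ℝ) • (y - x) = z + (1 / 2 : ℝ) • (x - y) := by module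
    rwa [he] at h
end
end

section
/- Every norm on ℝ² is a cylinder-like convex function. -/
open MeasureTheory Metric Set
open scoped ENNReal

noncomputable section

theorem plane_half_step (n : Euc 2 → ℝ)
    (hn0 : ∀ x, n x = 0 ↔ x = 0)
    (hhom : ∀ (a : ℝ) (x : Euc 2), n (a • x) = |a| * n x)
    (htri : ∀ x y : Euc 2, n (x + y) ≤ n x + n y)
    (hnn : ∀ x, 0 ≤ n x) (hc : Continuous n)
    (p q : Euc 2) (hpq : p ≠ q) (h : n p = n q) :
    ∃ δ > (0 : ℝ), ∀ x ∈ Metric.ball p δ, n (x - (1 / 2 : ℝ) • (p - q)) ≤ n x := by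
  have hr : 0 < n p := by
    rcases (hnn p).lt_or_eq with h1 | h1
    · exact h1
    · exact absurd (((hn0 p).1 h1.symm).trans ((hn0 q).1 (h ▸ h1.symm)).symm) hpq
  by_cases hm : n (p - (1 / 2 : ℝ) • (p - q)) < n p
  · have ho : IsOpen {x : Euc 2 | n (x - (1 / 2 : ℝ) • (p - q)) < n x} :=
      isOpen_lt (by fun_prop) hc
    obtain ⟨δ, hδ, hb⟩ := Metric.isOpen_iff.1 ho p hm
    exact ⟨δ, hδ, fun x hx => le_of_lt (hb hx)⟩
  · have hmid : p - (1 / 2 : ℝ) • (p - q) = (1 / 2 : ℝ) • (p + q) := by module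
    rw [hmid, hhom, abs_of_pos (by norm_num : (0 : ℝ) < 1 / 2)] at hm
    have hs : 2 * n p ≤ n (p + q) := by linarith
    have hli : LinearIndependent ℝ ![p, q] := by
      rw [LinearIndependent.pair_iff]
      intro s t hst
      have h1 : s • p = (-t) • q := by
        rw [neg_smul]; exact eq_neg_of_add_eq_zero_left hst
      have h2 : |s| = |t| := by
        have := congrArg n h1
        rw [hhom, hhom, abs_neg, ← h] at this
        exact mul_right_cancel₀ hr.ne' this
      by_cases hs0 : s = 0
      · subst hs0
        refine ⟨rfl, ?_⟩
        simpa using h2.symm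
      · exfalso
        rcases abs_eq_abs.1 h2 with h3 | h3
        · have : s • (p + q) = 0 := by rw [smul_add]; rw [← h3] at hst; exact hst
          have h4 := (smul_eq_zero.1 this).resolve_left hs0
          rw [(hn0 _).2 h4] at hs
          linarith
        · rw [← h3] at h1
          exact hpq (smul_right_injective _ hs0 h1)
    let B := basisOfLinearIndependentOfCardEqFinrank hli (by simp)
    have hB : ∀ x, x = B.coord 0 x • p + B.coord 1 x • q := by
      intro x
      have := B.sum_repr x
      rw [Fin.sum_univ_two] at this
      simpa [B] using this.symm
    have hB0 : B 0 = p := by simp [B]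
    have c0 : Continuous (B.coord 0) := LinearMap.continuous_of_finiteDimensional _
    have c1 : Continuous (B.coord 1) := LinearMap.continuous_of_finiteDimensional _
    have ho : IsOpen ({x : Euc 2 | 1 / 2 < B.coord 0 x} ∩ {x | -(1 / 2) < B.coord 1 x}) :=
      (isOpen_lt continuous_const c0).inter (isOpen_lt continuous_const c1)
    have hp : p ∈ ({x : Euc 2 | 1 / 2 < B.coord 0 x} ∩ {x | -(1 / 2) < B.coord 1 x}) := by
      rw [← hB0]
      constructor
      · simp only [Set.mem_setOf_eq, Module.Basis.coord_apply, Module.Basis.repr_self]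
        norm_num
      · simp only [Set.mem_setOf_eq, Module.Basis.coord_apply, Module.Basis.repr_self]
        norm_num
    obtain ⟨δ, hδ, hb⟩ := Metric.isOpen_iff.1 ho p hp
    refine ⟨δ, hδ, fun x hx => ?_⟩
    obtain ⟨ha, hbb⟩ := hb hx
    have hx' := hB x
    simp only [Set.mem_setOf_eq] at ha hbb
    generalize B.coord 0 x = a at *
    generalize B.coord 1 x = b at *
    have cone : ∀ u v : ℝ, 0 ≤ u → 0 ≤ v → n (u • p + v • q) ≤ (u + v) * n p := by
      intro u v hu hv
      have := htri (u • p) (v • q)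
      rw [hhom, hhom, abs_of_nonneg hu, abs_of_nonneg hv, ← h] at this
      linarith
    have e1 : x - (1 / 2 : ℝ) • (p - q) = (a - 1 / 2) • p + (b + 1 / 2) • q := by
      rw [hx']; module
    have i1 := cone (a - 1 / 2) (b + 1 / 2) (by linarith) (by linarith)
    have hK : 0 ≤ |a| + |b| := by positivity
    have i2 := cone (|a| + |b| - a) (|a| + |b| - b)
      (by linarith [le_abs_self a, abs_nonneg b]) (by linarith [le_abs_self b, abs_nonneg a])
    have e2 : (|a| + |b|) • (p + q)
        = x + ((|a| + |b| - a) • p + (|a| + |b| - b) • q) := by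
      rw [hx']; module
    have i3 := htri x ((|a| + |b| - a) • p + (|a| + |b| - b) • q)
    rw [← e2, hhom, abs_of_nonneg hK] at i3
    have i4 := mul_le_mul_of_nonneg_left hs hK
    rw [e1]
    linarith

theorem norm_on_plane_isCylinderLike (n : Euc 2 → ℝ)
    (hn0 : ∀ x, n x = 0 ↔ x = 0)
    (hhom : ∀ (a : ℝ) (x : Euc 2), n (a • x) = |a| * n x)
    (htri : ∀ x y : Euc 2, n (x + y) ≤ n x + n y) :
    ConvexOn ℝ Set.univ n ∧ (∀ x, 0 ≤ n x) ∧ IsCylinderLike n := by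
  have hconv : ConvexOn ℝ Set.univ n := by
    refine ⟨convex_univ, fun x _ y _ a b ha hb _ => ?_⟩
    have := htri (a • x) (b • y)
    rwa [hhom, hhom, abs_of_nonneg ha, abs_of_nonneg hb] at this
  have hnn : ∀ x, 0 ≤ n x := by
    intro x
    have h1 := htri x ((-1 : ℝ) • x)
    have h2 : x + (-1 : ℝ) • x = 0 := by module
    rw [h2, (hn0 0).2 rfl, hhom, abs_neg, abs_one] at h1
    linarith
  have hc : Continuous n := by
    rw [← continuousOn_univ]
    exact hconv.continuousOn isOpen_univ
  refine ⟨hconv, hnn, fun p q hpq h => ?_⟩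
  obtain ⟨d, hd, h1⟩ := plane_half_step n hn0 hhom htri hnn hc p q hpq h
  obtain ⟨e, he, h2⟩ := plane_half_step n hn0 hhom htri hnn hc q p hpq.symm h.symm
  refine ⟨1 / 2, by norm_num, min d e, lt_min hd he, fun x hx => ?_, fun y hy => ?_⟩
  · exact h1 x (Metric.ball_subset_ball (min_le_left _ _) hx)
  · have := h2 y (Metric.ball_subset_ball (min_le_right _ _) hy)
    have e1 : y - (1 / 2 : ℝ) • (q - p) = y + (1 / 2 : ℝ) • (p - q) := by module
    rwa [e1] at this
end
end

section
/- If f, g : ℝ^N → [0,∞) are cylinder-like convex functions, then the pointwise maximum max(f, g) is a cylinder-like convex function. -/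
open MeasureTheory Metric Set
open scoped ENNReal

noncomputable section

open Filter Topology in
lemma aux_scale {N : ℕ} {f : Euc N → ℝ} (hf : ConvexOn ℝ Set.univ f) {x v : Euc N} {ε e : ℝ}
    (hε : 0 < ε) (h0 : 0 ≤ e) (h1 : e ≤ ε) (h : f (x - ε • v) ≤ f x) : f (x - e • v) ≤ f x := by
  have ht0 : 0 ≤ e / ε := by positivity
  have ht1 : e / ε ≤ 1 := (div_le_one hε).2 h1
  have key := hf.2 (Set.mem_univ x) (Set.mem_univ (x - ε • v)) (sub_nonneg.2 ht1) ht0 (by ring)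
  have hx : (1 - e / ε) • x + (e / ε) • (x - ε • v) = x - e • v := by
    rw [smul_sub, smul_smul, div_mul_cancel₀ _ hε.ne', sub_smul, one_smul]; abel
  rw [hx] at key
  simp only [smul_eq_mul] at key
  nlinarith

open Filter Topology in
lemma aux_A {N : ℕ} {f : Euc N → ℝ} (hf : ConvexOn ℝ Set.univ f) (hc : Continuous f)
    (hcyl : IsCylinderLike f) {x y : Euc N} (hne : x ≠ y) (hle : f y ≤ f x) :
    ∀ᶠ p : ℝ × Euc N in 𝓝[>] 0 ×ˢ 𝓝 x, f (p.2 - p.1 • (x - y)) ≤ f p.2 := by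
  have main : ∃ ε > (0 : ℝ), ∀ᶠ z in 𝓝 x, f (z - ε • (x - y)) ≤ f z := by
    rcases hle.eq_or_lt with h | h
    · obtain ⟨ε, hε, δ, hδ, h1, -⟩ := hcyl x y hne h.symm
      exact ⟨ε, hε, Filter.mem_of_superset (Metric.ball_mem_nhds x hδ) h1⟩
    · refine ⟨1, one_pos, ?_⟩
      have c1 : Continuous fun z => f (z - (1 : ℝ) • (x - y)) := by fun_prop
      have : ∀ᶠ z in 𝓝 x, f (z - (1 : ℝ) • (x - y)) < f z :=
        c1.continuousAt.eventually_lt hc.continuousAt (by simpa using h)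
      exact this.mono fun z hz => hz.le
  obtain ⟨ε, hε, h⟩ := main
  have h2 : ∀ᶠ e : ℝ in 𝓝[>] 0, e ∈ Set.Ioc 0 ε := Ioc_mem_nhdsGT hε
  filter_upwards [h2.prod_mk h] with p hp
  exact aux_scale hf hε hp.1.1.le hp.1.2 hp.2

open Filter Topology in
lemma aux_B {N : ℕ} {f g : Euc N → ℝ} (hf : Continuous f) (hg : Continuous g)
    {x : Euc N} (v : Euc N) (h : f x < g x) :
    ∀ᶠ p : ℝ × Euc N in 𝓝[>] 0 ×ˢ 𝓝 x, f (p.2 - p.1 • v) ≤ g p.2 := by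
  have c1 : Continuous fun p : ℝ × Euc N => f (p.2 - p.1 • v) := by fun_prop
  have c2 : Continuous fun p : ℝ × Euc N => g p.2 := by fun_prop
  have : ∀ᶠ p : ℝ × Euc N in 𝓝 (0, x), f (p.2 - p.1 • v) < g p.2 :=
    c1.continuousAt.eventually_lt c2.continuousAt (by simpa using h)
  rw [nhds_prod_eq] at this
  exact (this.filter_mono (Filter.prod_mono_left _ nhdsWithin_le_nhds)).mono fun p hp => hp.le

open Filter Topology in
lemma aux_C {N : ℕ} {f g : Euc N → ℝ}
    (hfconv : ConvexOn ℝ Set.univ f) (hfc : Continuous f) (hfcyl : IsCylinderLike f)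
    (hgconv : ConvexOn ℝ Set.univ g) (hgc : Continuous g) (hgcyl : IsCylinderLike g)
    {x y : Euc N} (hne : x ≠ y) (hle : max (f y) (g y) ≤ max (f x) (g x)) :
    ∀ᶠ p : ℝ × Euc N in 𝓝[>] 0 ×ˢ 𝓝 x,
      max (f (p.2 - p.1 • (x - y))) (g (p.2 - p.1 • (x - y))) ≤ max (f p.2) (g p.2) := by
  rcases lt_trichotomy (f x) (g x) with h | h | h
  · rw [max_eq_right h.le] at hle
    filter_upwards [aux_B hfc hgc (x - y) h,
      aux_A hgconv hgc hgcyl hne ((le_max_right _ _).trans hle)] with p h1 h2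
    exact max_le (h1.trans (le_max_right _ _)) (h2.trans (le_max_right _ _))
  · rw [h, max_self] at hle
    filter_upwards [aux_A hfconv hfc hfcyl hne (((le_max_left _ _).trans hle).trans h.ge),
      aux_A hgconv hgc hgcyl hne ((le_max_right _ _).trans hle)] with p h1 h2
    exact max_le_max h1 h2
  · rw [max_eq_left h.le] at hle
    filter_upwards [aux_B hgc hfc (x - y) h,
      aux_A hfconv hfc hfcyl hne ((le_max_left _ _).trans hle)] with p h1 h2
    exact max_le (h2.trans (le_max_left _ _)) (h1.trans (le_max_left _ _))

theorem max_isCylinderLike {N : ℕ} (f g : Euc N → ℝ)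
    (hfconv : ConvexOn ℝ Set.univ f) (hfnonneg : ∀ x, 0 ≤ f x) (hfcyl : IsCylinderLike f)
    (hgconv : ConvexOn ℝ Set.univ g) (hgnonneg : ∀ x, 0 ≤ g x) (hgcyl : IsCylinderLike g) :
    ConvexOn ℝ Set.univ (fun x => max (f x) (g x)) ∧
      (∀ x, 0 ≤ max (f x) (g x)) ∧
      IsCylinderLike (fun x => max (f x) (g x)) := by
  have hfc : Continuous f := continuousOn_univ.1 (hfconv.continuousOn isOpen_univ)
  have hgc : Continuous g := continuousOn_univ.1 (hgconv.continuousOn isOpen_univ)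
  refine ⟨hfconv.sup hgconv, fun x => (hfnonneg x).trans (le_max_left _ _), ?_⟩
  intro x y hne heq
  have h1 := (aux_C hfconv hfc hfcyl hgconv hgc hgcyl hne heq.ge).curry
  have h2 := (aux_C hfconv hfc hfcyl hgconv hgc hgcyl hne.symm heq.le).curry
  obtain ⟨ε, ⟨ha, hb⟩, hε⟩ := ((h1.and h2).and self_mem_nhdsWithin).exists
  obtain ⟨d1, hd1, hx⟩ := Metric.eventually_nhds_iff_ball.1 ha
  obtain ⟨d2, hd2, hy⟩ := Metric.eventually_nhds_iff_ball.1 hb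
  refine ⟨ε, hε, min d1 d2, lt_min hd1 hd2, fun z hz => ?_, fun z hz => ?_⟩
  · exact hx z (Metric.ball_subset_ball (min_le_left _ _) hz)
  · have := hy z (Metric.ball_subset_ball (min_le_right _ _) hz)
    have e : z - ε • (y - x) = z + ε • (x - y) := by
      rw [← neg_sub x y, smul_neg, sub_neg_eq_add]
    simp only [e] at this
    exact this
end
end

section
/- Let M > N be positive integers, let g : ℝ^N → [0,∞) be a cylinder-like convex function, and let p : ℝ^M → ℝ^N be the projection onto any N distinct coordinates of ℝ^M. Then g ∘ p is a cylinder-like convex function on ℝ^M. -/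
open MeasureTheory Metric Set
open scoped ENNReal

noncomputable section

theorem comp_proj_isCylinderLike {M N : ℕ} (hMN : N < M) (hN : 0 < N)
    (g : Euc N → ℝ)
    (hgconv : ConvexOn ℝ Set.univ g) (hgnonneg : ∀ x, 0 ≤ g x) (hgcyl : IsCylinderLike g)
    (ι : Fin N → Fin M) (hι : Function.Injective ι)
    (p : Euc M → Euc N) (hp : ∀ (x : Euc M) (i : Fin N), p x i = x (ι i)) :
    ConvexOn ℝ Set.univ (g ∘ p) ∧ (∀ x, 0 ≤ (g ∘ p) x) ∧ IsCylinderLike (g ∘ p) := by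
  let L : Euc M →ₗ[ℝ] Euc N :=
    { toFun := p
      map_add' := by intro x y; ext i; simp [hp]
      map_smul' := by intro c x; ext i; simp [hp] }
  have hadd : ∀ x y, p (x + y) = p x + p y := L.map_add
  have hsub : ∀ x y, p (x - y) = p x - p y := L.map_sub
  have hsmul : ∀ (c : ℝ) x, p (c • x) = c • p x := L.map_smul
  have hcont : Continuous p := L.continuous_of_finiteDimensional
  refine ⟨hgconv.comp_linearMap L, fun x => hgnonneg _, ?_⟩
  intro xb yb _ hg
  by_cases h : p xb = p yb
  · refine ⟨1, one_pos, 1, one_pos, ?_, ?_⟩ <;> intro x _ <;>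
      simp [hadd, hsub, h]
  · obtain ⟨ε, hε, δ, hδ, h1, h2⟩ := hgcyl (p xb) (p yb) h hg
    obtain ⟨d1, hd1, hb1⟩ := Metric.continuous_iff.mp hcont xb δ hδ
    obtain ⟨d2, hd2, hb2⟩ := Metric.continuous_iff.mp hcont yb δ hδ
    refine ⟨ε, hε, min d1 d2, lt_min hd1 hd2, ?_, ?_⟩
    · intro x hx
      have := h1 (p x) (hb1 x (lt_of_lt_of_le hx (min_le_left _ _)))
      simpa only [Function.comp, hsub, hsmul] using this
    · intro x hx
      have := h2 (p x) (hb2 x (lt_of_lt_of_le hx (min_le_right _ _)))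
      simpa only [Function.comp, hadd, hsub, hsmul] using this
end
end

section
/- The cylinder norm on ℝ³, defined by ‖(x, y, z)‖ = max{√(x² + y²), |z|}, is a cylinder-like convex function. -/
open MeasureTheory Metric Set
open scoped ENNReal

noncomputable section

/-- The cylinder norm on `ℝ³`: `‖(x, y, z)‖ = max {√(x² + y²), |z|}`. -/
noncomputable def cylinderNorm (w : Euc 3) : ℝ :=
  max (Real.sqrt (w 0 ^ 2 + w 1 ^ 2)) |w 2|

open Filter Topology in
theorem aux_inner {H : Type*} [NormedAddCommGroup H] [InnerProductSpace ℝ H] (u v : H)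
    (h : ‖v‖ ≤ ‖u‖) :
    ∀ᶠ p : ℝ × H in (𝓝[>] (0:ℝ)) ×ˢ 𝓝 u, ‖p.2 - p.1 • (u - v)‖ ≤ ‖p.2‖ := by
  by_cases huv : u = v
  · subst huv; simp
  have hpos : 0 < 2 * inner ℝ u (u - v) := by
    have h1 : 0 < ‖u - v‖ := norm_pos_iff.mpr (sub_ne_zero.mpr huv)
    have h2 := norm_sub_sq_real u v
    rw [inner_sub_right, real_inner_self_eq_norm_sq]
    nlinarith [norm_nonneg v]
  have hc : Continuous (fun p : ℝ × H => 2 * inner ℝ p.2 (u - v) - p.1 * ‖u - v‖ ^ 2) := by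
    fun_prop
  have hev : ∀ᶠ p : ℝ × H in 𝓝 (0, u), 0 < 2 * inner ℝ p.2 (u - v) - p.1 * ‖u - v‖ ^ 2 :=
    hc.continuousAt.eventually (lt_mem_nhds (by simpa using hpos))
  rw [nhds_prod_eq] at hev
  have hev' := hev.filter_mono
    (Filter.prod_mono_left (𝓝 u) (nhdsWithin_le_nhds (a := (0:ℝ)) (s := Set.Ioi 0)))
  have hp : ∀ᶠ p : ℝ × H in (𝓝[>] (0:ℝ)) ×ˢ 𝓝 u, 0 < p.1 :=
    tendsto_fst.eventually (self_mem_nhdsWithin : Set.Ioi (0:ℝ) ∈ 𝓝[>] (0:ℝ))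
  filter_upwards [hev', hp] with p h1 h2
  have h3 := norm_sub_sq_real p.2 (p.1 • (u - v))
  rw [norm_smul, inner_smul_right, mul_pow, Real.norm_eq_abs, sq_abs] at h3
  refine le_of_sq_le_sq ?_ (norm_nonneg _)
  nlinarith [mul_pos h2 h1]

open Filter Topology in
theorem aux_map_s9 {V H : Type*} [NormedAddCommGroup V] [NormedSpace ℝ V]
    [NormedAddCommGroup H] [InnerProductSpace ℝ H] (L : V →L[ℝ] H) (g : V → ℝ)
    (hg : Continuous g) (hL : ∀ x, ‖L x‖ ≤ g x) (a b : V) (hab : g a = g b) :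
    ∀ᶠ p : ℝ × V in (𝓝[>] (0:ℝ)) ×ˢ 𝓝 a, ‖L (p.2 - p.1 • (a - b))‖ ≤ g p.2 := by
  rcases (hL a).lt_or_eq with h | h
  · have hc : Continuous (fun p : ℝ × V => g p.2 - ‖L (p.2 - p.1 • (a - b))‖) := by
      fun_prop
    have hev : ∀ᶠ p : ℝ × V in 𝓝 (0, a), 0 < g p.2 - ‖L (p.2 - p.1 • (a - b))‖ :=
      hc.continuousAt.eventually (lt_mem_nhds (by simpa using h))
    rw [nhds_prod_eq] at hev
    have hev' := hev.filter_mono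
      (Filter.prod_mono_left (𝓝 a) (nhdsWithin_le_nhds (a := (0:ℝ)) (s := Set.Ioi 0)))
    filter_upwards [hev'] with p h1
    linarith
  · have h1 := aux_inner (L a) (L b) (by rw [h, hab]; exact hL b)
    have h2 : Tendsto (fun p : ℝ × V => (p.1, L p.2)) ((𝓝[>] (0:ℝ)) ×ˢ 𝓝 a)
        ((𝓝[>] (0:ℝ)) ×ˢ 𝓝 (L a)) :=
      tendsto_id.prodMap (L.continuous.tendsto a)
    filter_upwards [h2.eventually h1] with p h3
    refine le_trans ?_ (hL p.2)
    simpa using h3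

/-- The horizontal projection. -/
def horiz : Euc 3 →L[ℝ] Euc 2 :=
  LinearMap.toContinuousLinearMap
    { toFun := fun w => !₂[w 0, w 1]
      map_add' := by intro x y; ext i; fin_cases i <;> simp
      map_smul' := by intro c x; ext i; fin_cases i <;> simp }

/-- The vertical projection. -/
def vert : Euc 3 →L[ℝ] ℝ := EuclideanSpace.proj 2

theorem cyl_eq (w : Euc 3) : cylinderNorm w = max ‖horiz w‖ ‖vert w‖ := by
  simp [cylinderNorm, horiz, vert, EuclideanSpace.norm_eq, Fin.sum_univ_two]

theorem cyl_cont : Continuous cylinderNorm := by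
  rw [funext cyl_eq]; fun_prop

open Filter Topology in
theorem cyl_ev (a b : Euc 3) (hab : cylinderNorm a = cylinderNorm b) :
    ∀ᶠ e in 𝓝[>] (0:ℝ), ∀ᶠ x in 𝓝 a, cylinderNorm (x - e • (a - b)) ≤ cylinderNorm x := by
  have h1 := aux_map_s9 horiz cylinderNorm cyl_cont
    (fun x => by rw [cyl_eq]; exact le_max_left _ _) a b hab
  have h2 := aux_map_s9 vert cylinderNorm cyl_cont
    (fun x => by rw [cyl_eq]; exact le_max_right _ _) a b hab
  have h3 := (h1.and h2).curry
  filter_upwards [h3] with e he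
  filter_upwards [he] with x hx
  rw [cyl_eq (x - e • (a - b))]
  exact max_le hx.1 hx.2

open Filter Topology in
theorem cylinderNorm_isCylinderLike :
    ConvexOn ℝ Set.univ cylinderNorm ∧ (∀ w, 0 ≤ cylinderNorm w) ∧
      IsCylinderLike cylinderNorm := by
  refine ⟨?_, ?_, ?_⟩
  · have h1 : ConvexOn ℝ Set.univ (fun w => ‖horiz w‖) :=
      (convexOn_univ_norm (E := Euc 2)).comp_linearMap horiz.toLinearMap
    have h2 : ConvexOn ℝ Set.univ (fun w => ‖vert w‖) :=
      (convexOn_univ_norm (E := ℝ)).comp_linearMap vert.toLinearMap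
    rw [funext cyl_eq]
    exact h1.sup h2
  · intro w
    exact le_max_of_le_right (abs_nonneg _)
  · intro a b _ hab
    have hp : ∀ᶠ e in 𝓝[>] (0:ℝ), 0 < e := self_mem_nhdsWithin
    obtain ⟨e, he, h1, h2⟩ := (hp.and ((cyl_ev a b hab).and (cyl_ev b a hab.symm))).exists
    obtain ⟨d1, hd1, k1⟩ := Metric.eventually_nhds_iff_ball.mp h1
    obtain ⟨d2, hd2, k2⟩ := Metric.eventually_nhds_iff_ball.mp h2
    refine ⟨e, he, min d1 d2, lt_min hd1 hd2, fun x hx => ?_, fun y hy => ?_⟩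
    · exact k1 x (Metric.ball_subset_ball (min_le_left _ _) hx)
    · have h := k2 y (Metric.ball_subset_ball (min_le_right _ _) hy)
      rwa [← neg_sub a b, smul_neg, sub_neg_eq_add] at h
end
end

section
/- The double cone norm on ℝ³, defined by ‖(x, y, z)‖ = √(x² + y²) + |z|, is NOT a cylinder-like convex function. In particular, for x̄ = (2/3, 0, 1/3) and ȳ = (1/3, 0, 2/3), one has x̄ ≠ ȳ and ‖x̄‖ = ‖ȳ‖, but there are no ε > 0 and δ > 0 such that ‖x − ε(x̄ − ȳ)‖ ≤ ‖x‖ for all x ∈ B_δ(x̄) and ‖y + ε(x̄ − ȳ)‖ ≤ ‖y‖ for all y ∈ B_δ(ȳ). -/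
open MeasureTheory Metric Set
open scoped ENNReal

noncomputable section

/-- The double cone norm on `ℝ³`: `‖(x, y, z)‖ = √(x² + y²) + |z|`. -/
noncomputable def doubleConeNorm (w : Euc 3) : ℝ :=
  Real.sqrt (w 0 ^ 2 + w 1 ^ 2) + |w 2|

theorem doubleCone_core (xb yb : Euc 3)
    (hx : ∀ i, xb i = ![2/3, 0, 1/3] i) (hy : ∀ i, yb i = ![1/3, 0, 2/3] i) :
      xb ≠ yb ∧ doubleConeNorm xb = doubleConeNorm yb ∧
        ¬ ∃ ε > (0 : ℝ), ∃ δ > (0 : ℝ),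
            (∀ x ∈ Metric.ball xb δ, doubleConeNorm (x - ε • (xb - yb)) ≤ doubleConeNorm x) ∧
            (∀ y ∈ Metric.ball yb δ, doubleConeNorm (y + ε • (xb - yb)) ≤ doubleConeNorm y) := by
  have x0 : xb 0 = 2/3 := by simpa using hx 0
  have x1 : xb 1 = 0 := by simpa using hx 1
  have x2 : xb 2 = 1/3 := by simpa using hx 2
  have y0 : yb 0 = 1/3 := by simpa using hy 0
  have y1 : yb 1 = 0 := by simpa using hy 1
  have y2 : yb 2 = 2/3 := by simpa using hy 2
  refine ⟨?_, ?_, ?_⟩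
  · intro h
    rw [h, y0] at x0
    norm_num at x0
  · unfold doubleConeNorm
    rw [x0, x1, x2, y0, y1, y2]
    have h1 : Real.sqrt ((2/3 : ℝ)^2 + 0^2) = 2/3 := by
      rw [show (2/3 : ℝ)^2 + 0^2 = (2/3)^2 by norm_num]
      exact Real.sqrt_sq (by norm_num)
    have h2 : Real.sqrt ((1/3 : ℝ)^2 + 0^2) = 1/3 := by
      rw [show (1/3 : ℝ)^2 + 0^2 = (1/3)^2 by norm_num]
      exact Real.sqrt_sq (by norm_num)
    rw [h1, h2, abs_of_pos (by norm_num), abs_of_pos (by norm_num)]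
    norm_num
  · rintro ⟨ε, hε, δ, hδ, h, -⟩
    have hb : xb + EuclideanSpace.single (1 : Fin 3) (δ/2) ∈ Metric.ball xb δ := by
      rw [Metric.mem_ball, dist_eq_norm, add_sub_cancel_left, EuclideanSpace.norm_single,
        Real.norm_eq_abs, abs_of_pos (by positivity)]
      linarith
    have key := h _ hb
    simp only [doubleConeNorm, PiLp.add_apply, PiLp.sub_apply, PiLp.smul_apply, smul_eq_mul,
      x0, x1, x2, y0, y1, y2, EuclideanSpace.single_apply] at key
    norm_num at key
    rw [if_neg (by decide), add_zero, abs_of_pos (by linarith),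
      abs_of_pos (by norm_num)] at key
    have hs : 2 / 3 - ε * (1 / 3) < √((2 / 3 - ε * (1 / 3)) ^ 2 + (δ / 2) ^ 2) := by
      apply Real.lt_sqrt_of_sq_lt
      have : 0 < (δ / 2) ^ 2 := by positivity
      linarith
    have hs0 := Real.sqrt_nonneg ((2 / 3 - ε * (1 / 3)) ^ 2 + (δ / 2) ^ 2)
    have hs2 := Real.sq_sqrt
      (show 0 ≤ (2 / 3 - ε * (1 / 3)) ^ 2 + (δ / 2) ^ 2 by positivity)
    have hr : √(4 / 9 + (δ / 2) ^ 2) <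
        √((2 / 3 - ε * (1 / 3)) ^ 2 + (δ / 2) ^ 2) + ε * (1 / 3) := by
      rw [Real.sqrt_lt' (by linarith)]
      have := mul_pos hε (sub_pos.2 hs)
      nlinarith
    linarith

theorem doubleConeNorm_not_cylinderLike :
    ¬ IsCylinderLike doubleConeNorm ∧
    ∀ xb yb : Euc 3,
      (∀ i, xb i = ![2/3, 0, 1/3] i) → (∀ i, yb i = ![1/3, 0, 2/3] i) →
      xb ≠ yb ∧ doubleConeNorm xb = doubleConeNorm yb ∧
        ¬ ∃ ε > (0 : ℝ), ∃ δ > (0 : ℝ),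
            (∀ x ∈ Metric.ball xb δ, doubleConeNorm (x - ε • (xb - yb)) ≤ doubleConeNorm x) ∧
            (∀ y ∈ Metric.ball yb δ, doubleConeNorm (y + ε • (xb - yb)) ≤ doubleConeNorm y) := by
  refine ⟨?_, doubleCone_core⟩
  intro h
  obtain ⟨h1, h2, h3⟩ := doubleCone_core (WithLp.toLp 2 ![2/3, 0, 1/3])
    (WithLp.toLp 2 ![1/3, 0, 2/3]) (fun _ => rfl) (fun _ => rfl)
  exact h3 (h _ _ h1 h2)
end
end

section
/- Let g : ℝ^N → [0,∞) be a convex function and suppose that for every x̄, ȳ ∈ ℝ^N with x̄ ≠ ȳ, g(x̄) = g(ȳ) and g(t·x̄ + (1−t)·ȳ) = t·g(x̄) + (1−t)·g(ȳ) for all t ∈ (0,1), there exist ε > 0 and δ > 0 satisfying g(x − ε(x̄ − ȳ)) ≤ g(x) for all x ∈ B_δ(x̄) and g(y + ε(x̄ − ȳ)) ≤ g(y) for all y ∈ B_δ(ȳ). Then g is cylinder-like, i.e. the same conclusion holds for every pair x̄ ≠ ȳ with g(x̄) = g(ȳ). -/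
open MeasureTheory Metric Set
open scoped ENNReal

noncomputable section

theorem aux_decrease {N : ℕ} (g : Euc N → ℝ) (hconv : ConvexOn ℝ Set.univ g)
    (p v : Euc N) (s : ℝ) (hs : 0 < s) (h : g (p + s • v) < g p) :
    ∃ δ > (0 : ℝ), ∀ x ∈ Metric.ball p δ, ∀ ε : ℝ, 0 ≤ ε → ε ≤ s → g (x + ε • v) ≤ g x := by
  have hc : Continuous g := by
    rw [← continuousOn_univ]
    exact hconv.continuousOn isOpen_univ
  have ho : IsOpen {x : Euc N | g (x + s • v) < g x} :=
    isOpen_lt (hc.comp (continuous_id.add continuous_const)) hc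
  obtain ⟨δ, hδ, hb⟩ := Metric.isOpen_iff.1 ho p h
  refine ⟨δ, hδ, fun x hx ε h0 h1 => ?_⟩
  have h2 : g (x + s • v) < g x := hb hx
  have hq : 0 ≤ ε / s := div_nonneg h0 hs.le
  have hq1 : ε / s ≤ 1 := (div_le_one hs).2 h1
  have h3 := hconv.2 (Set.mem_univ x) (Set.mem_univ (x + s • v))
    (sub_nonneg.2 hq1) hq (by ring)
  have h4 : (1 - ε / s) • x + (ε / s) • (x + s • v) = x + ε • v := by
    rw [smul_add, smul_smul, div_mul_cancel₀ _ hs.ne']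
    module
  rw [h4] at h3
  simp only [smul_eq_mul] at h3
  nlinarith

theorem cylinderLike_of_flat_pairs {N : ℕ} (g : Euc N → ℝ)
    (hconv : ConvexOn ℝ Set.univ g) (hnonneg : ∀ x, 0 ≤ g x)
    (hyp : ∀ xb yb : Euc N, xb ≠ yb → g xb = g yb →
      (∀ t ∈ Set.Ioo (0 : ℝ) 1,
        g (t • xb + (1 - t) • yb) = t * g xb + (1 - t) * g yb) →
      ∃ ε > (0 : ℝ), ∃ δ > (0 : ℝ),
        (∀ x ∈ Metric.ball xb δ, g (x - ε • (xb - yb)) ≤ g x) ∧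
        (∀ y ∈ Metric.ball yb δ, g (y + ε • (xb - yb)) ≤ g y)) :
    IsCylinderLike g := by
  intro xb yb hne heq
  by_cases hflat : ∀ t ∈ Set.Ioo (0 : ℝ) 1,
      g (t • xb + (1 - t) • yb) = t * g xb + (1 - t) * g yb
  · exact hyp xb yb hne heq hflat
  push Not at hflat
  obtain ⟨t, ⟨ht0, ht1⟩, hne'⟩ := hflat
  have hle := hconv.2 (Set.mem_univ xb) (Set.mem_univ yb) ht0.le (sub_nonneg.2 ht1.le) (by ring)
  simp only [smul_eq_mul] at hle
  have hlt := lt_of_le_of_ne hle hne'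
  have hx : g (xb + (1 - t) • (-(xb - yb))) < g xb := by
    have : xb + (1 - t) • (-(xb - yb)) = t • xb + (1 - t) • yb := by module
    rw [this]
    rw [← heq] at hlt
    linarith
  have hy : g (yb + t • (xb - yb)) < g yb := by
    have : yb + t • (xb - yb) = t • xb + (1 - t) • yb := by module
    rw [this]
    rw [heq] at hlt
    linarith
  obtain ⟨δ₁, hδ₁, h₁⟩ := aux_decrease g hconv _ _ _ (sub_pos.2 ht1) hx
  obtain ⟨δ₂, hδ₂, h₂⟩ := aux_decrease g hconv _ _ _ ht0 hy
  have hε : 0 < min (1 - t) t := lt_min (sub_pos.2 ht1) ht0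
  refine ⟨min (1 - t) t, hε, min δ₁ δ₂, lt_min hδ₁ hδ₂, fun x hx => ?_, fun y hy => ?_⟩
  · have := h₁ x (Metric.ball_subset_ball (min_le_left _ _) hx) _ hε.le (min_le_left _ _)
    rwa [smul_neg, ← sub_eq_add_neg] at this
  · exact h₂ y (Metric.ball_subset_ball (min_le_right _ _) hy) _ hε.le (min_le_right _ _)
end
end

section
/- Let c : ℝ^N × ℝ^N → [0,∞) be a continuous cost function, and let μ, ν be Borel probability measures on ℝ^N with compact support and finite minimal transport cost for c. Let Π₁(μ,ν) denote the set of optimal transport plans for c, and let Π₂(μ,ν) ⊆ Π₁(μ,ν) denote the set of minimizers of π ↦ ∫ d_eu²(x,y) dπ(x,y) over Π₁(μ,ν), where d_eu is the Euclidean distance. Then every π ∈ Π₂(μ,ν) is concentrated on a set Γ ⊆ ℝ^N × ℝ^N with the property that for every (x,y), (x′,y′) ∈ Γ: (a) c(x,y) + c(x′,y′) ≤ c(x,y′) + c(x′,y), and (b) if c(x,y) + c(x′,y′) = c(x,y′) + c(x′,y), then d_eu²(x,y) + d_eu²(x′,y′) ≤ d_eu²(x,y′) + d_eu²(x′,y).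 -/
open MeasureTheory Metric Set
open scoped ENNReal

noncomputable section

section Helpers
open Filter Topology CompactlySupported BoundedContinuousFunction

lemma exists_prob_of_convex {X : Type*} [TopologicalSpace X] [T2Space X] [CompactSpace X]
    [MeasurableSpace X] [BorelSpace X] (A : Set C(X, ℝ)) (hA : Convex ℝ A)
    (hne : A.Nonempty) (hpos : ∀ a ∈ A, ¬ ∀ x, 0 < a x) :
    ∃ γ : Measure X, IsProbabilityMeasure γ ∧ ∀ a ∈ A, ∫ x, a x ∂γ ≤ 0 := by
  classical
  let S : Set C(X, ℝ) := {h | ∀ x, 0 < h x}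
  have hSo : IsOpen S := by
    have := ContinuousMap.isOpen_setOfPred_mapsTo (X := X) (Y := ℝ) isCompact_univ
      (isOpen_Ioi (a := (0 : ℝ)))
    convert this using 1
    ext h; simp [S, MapsTo]
  have hSc : Convex ℝ S := by
    intro f hf g hg a b ha hb hab x
    have h1 := hf x
    have h2 := hg x
    simp only [ContinuousMap.add_apply, ContinuousMap.smul_apply, smul_eq_mul]
    rcases ha.eq_or_lt with rfl | ha
    · have : b = 1 := by linarith
      subst this; simpa using h2
    · have := mul_pos ha h1
      have := mul_nonneg hb h2.le
      linarith
  have hdisj : Disjoint S A := by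
    rw [Set.disjoint_left]
    intro a haS haA
    exact hpos a haA haS
  obtain ⟨f, u, hfS, hfA⟩ := geometric_hahn_banach_open hSc hSo hA hdisj
  have hsmul : ∀ h ∈ S, ∀ t : ℝ, 0 < t → t * f h < u := by
    intro h hh t ht
    have := hfS (t • h) (fun x => by
      have := mul_pos ht (hh x)
      simpa using this)
    simpa using this
  have hfneg : ∀ h ∈ S, f h ≤ 0 := by
    intro h hh
    by_contra! hcon
    have h1 := hsmul h hh ((|u| + 1) / f h) (by positivity)
    rw [div_mul_cancel₀ _ hcon.ne'] at h1
    linarith [le_abs_self u]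
  have h1S : (1 : C(X, ℝ)) ∈ S := fun x => by simp
  have hu : 0 ≤ u := by
    by_contra! hcon
    have h1 := hsmul 1 h1S (-u / (2 * (|f 1| + 1))) (div_pos (by linarith) (by positivity))
    have h2 : -u / (2 * (|f 1| + 1)) * f 1 ≥ -(-u / 2) := by
      have : -u / (2 * (|f 1| + 1)) * f 1 = (-u / 2) * (f 1 / (|f 1| + 1)) := by
        field_simp
      rw [this]
      have h3 : -1 ≤ f 1 / (|f 1| + 1) := by
        rw [le_div_iff₀ (by positivity)]
        linarith [neg_abs_le (f 1)]
      nlinarith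
    linarith
  have hfnonneg : ∀ h : C(X, ℝ), (∀ x, 0 ≤ h x) → f h ≤ 0 := by
    intro h hh
    have key : ∀ t : ℝ, 0 < t → f h + t * f 1 ≤ 0 := by
      intro t ht
      have := hfneg (h + t • 1) (fun x => by
        have := hh x
        simp; linarith)
      simpa using this
    by_contra! hcon
    have h1 := key (f h / (2 * (|f 1| + 1))) (by positivity)
    have h2 : f h / (2 * (|f 1| + 1)) * f 1 ≥ -(f h / 2) := by
      have : f h / (2 * (|f 1| + 1)) * f 1 = (f h / 2) * (f 1 / (|f 1| + 1)) := by
        field_simp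
      rw [this]
      have h3 : -1 ≤ f 1 / (|f 1| + 1) := by
        rw [le_div_iff₀ (by positivity)]
        linarith [neg_abs_le (f 1)]
      nlinarith
    linarith
  have hf1 : f 1 < 0 := by
    rcases (hfneg 1 h1S).eq_or_lt with h0 | h0
    · exfalso
      obtain ⟨a, ha⟩ := hne
      have h1 := hfnonneg (‖a‖ • 1 - a) (fun x => by
        have := (le_abs_self (a x)).trans (a.norm_coe_le_norm x)
        simpa using this)
      have h2 := hfnonneg (‖a‖ • 1 + a) (fun x => by
        have := (neg_abs_le (a x))
        have h3 := (a.norm_coe_le_norm x)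
        rw [Real.norm_eq_abs] at h3
        simp; linarith)
      simp [h0] at h1 h2
      have h3 := hfA a ha
      have h4 := hfS 1 h1S
      linarith
    · exact h0
  let L : C_c(X, ℝ) →ₗ[ℝ] ℝ :=
    { toFun := fun g => (f 1)⁻¹ * f g.toContinuousMap
      map_add' := by
        intro g h
        have : (g + h).toContinuousMap = g.toContinuousMap + h.toContinuousMap := rfl
        rw [this, map_add, mul_add]
      map_smul' := by
        intro r h
        have : (r • h).toContinuousMap = r • h.toContinuousMap := rfl
        rw [this, map_smul]
        simp only [smul_eq_mul, RingHom.id_apply]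
        ring }
  let Λ : C_c(X, ℝ) →ₚ[ℝ] ℝ := PositiveLinearMap.mk₀ L (by
    intro g hg
    have := hfnonneg g.toContinuousMap (fun x => hg x)
    exact mul_nonneg_of_nonpos_of_nonpos (inv_nonpos.2 hf1.le) this)
  have hint : ∀ a : C(X, ℝ), ∫ x, a x ∂(RealRMK.rieszMeasure Λ) = (f 1)⁻¹ * f a := by
    intro a
    have := RealRMK.integral_rieszMeasure Λ
      (CompactlySupportedContinuousMap.continuousMapEquiv a)
    exact this
  refine ⟨RealRMK.rieszMeasure Λ, ?_, ?_⟩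
  · have h1 := hint 1
    rw [inv_mul_cancel₀ hf1.ne] at h1
    simp [measureReal_def] at h1
    constructor
    rwa [ENNReal.toReal_eq_one_iff] at h1
  · intro a ha
    rw [hint]
    exact mul_nonpos_of_nonpos_of_nonneg (inv_nonpos.2 hf1.le) (hu.trans (hfA a ha))

lemma exists_dual {N : ℕ} (c d : Euc N × Euc N → ℝ) (hc : Continuous c) (hd : Continuous d)
    (μ ν : Measure (Euc N)) [IsProbabilityMeasure μ] [IsProbabilityMeasure ν]
    (K : Set (Euc N)) (hK : IsCompact K) (C D : ℝ)
    (hmin : ∀ γ : Measure (Euc N × Euc N), IsCoupling μ ν γ → γ (K ×ˢ K)ᶜ = 0 →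
      C ≤ ∫ p, c p ∂γ)
    (hopt : ∀ γ : Measure (Euc N × Euc N), IsCoupling μ ν γ → γ (K ×ˢ K)ᶜ = 0 →
      ∫ p, c p ∂γ ≤ C → D ≤ ∫ p, d p ∂γ) (k ε : ℝ) (hε : 0 < ε) :
    ∃ l : ℝ, k ≤ l ∧ ∃ f g : Euc N →ᵇ ℝ, ∀ x ∈ K, ∀ y ∈ K,
      0 < l * (c (x, y) - C) + (d (x, y) - D) + (f x - ∫ z, f z ∂μ) + (g y - ∫ z, g z ∂ν) + ε := by
  by_contra! hcon
  have : CompactSpace K := isCompact_iff_compactSpace.1 hK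
  let e : K × K → Euc N × Euc N := fun p => (p.1.1, p.2.1)
  have he : Continuous e := by fun_prop
  let F : ℝ → (Euc N →ᵇ ℝ) → (Euc N →ᵇ ℝ) → K × K → ℝ := fun l f g p =>
    l * (c (e p) - C) + (d (e p) - D) + (f p.1.1 - ∫ z, f z ∂μ) + (g p.2.1 - ∫ z, g z ∂ν) + ε
  have hF : ∀ l f g, Continuous (F l f g) := by
    intro l f g
    have := f.continuous
    have := g.continuous
    fun_prop
  let A : Set C(K × K, ℝ) := {h | ∃ l, k ≤ l ∧ ∃ f g, ∀ p, h p = F l f g p}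
  have hA : Convex ℝ A := by
    rintro h₁ ⟨l₁, hl₁, f₁, g₁, h1⟩ h₂ ⟨l₂, hl₂, f₂, g₂, h2⟩ a b ha hb hab
    refine ⟨a * l₁ + b * l₂, ?_, a • f₁ + b • f₂, a • g₁ + b • g₂, ?_⟩
    · have h3 := mul_le_mul_of_nonneg_left hl₁ ha
      have h4 := mul_le_mul_of_nonneg_left hl₂ hb
      have h5 : a * k + b * k = k := by rw [← add_mul, hab, one_mul]
      linarith
    · intro p
      have e1 : ∫ z, (a • f₁ + b • f₂) z ∂μ = a * ∫ z, f₁ z ∂μ + b * ∫ z, f₂ z ∂μ := by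
        simp only [BoundedContinuousFunction.coe_add, BoundedContinuousFunction.coe_smul,
          Pi.add_apply, smul_eq_mul]
        rw [integral_add ((f₁.integrable μ).const_mul a) ((f₂.integrable μ).const_mul b),
          integral_const_mul, integral_const_mul]
      have e2 : ∫ z, (a • g₁ + b • g₂) z ∂ν = a * ∫ z, g₁ z ∂ν + b * ∫ z, g₂ z ∂ν := by
        simp only [BoundedContinuousFunction.coe_add, BoundedContinuousFunction.coe_smul,
          Pi.add_apply, smul_eq_mul]
        rw [integral_add ((g₁.integrable ν).const_mul a) ((g₂.integrable ν).const_mul b),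
          integral_const_mul, integral_const_mul]
      simp only [ContinuousMap.add_apply, ContinuousMap.smul_apply, smul_eq_mul, h1, h2, F, e1, e2]
      simp only [BoundedContinuousFunction.coe_add, BoundedContinuousFunction.coe_smul,
          Pi.add_apply, smul_eq_mul]
      have : b = 1 - a := by linarith
      subst this
      ring
  obtain ⟨γ, hγ, hγA⟩ := exists_prob_of_convex A hA
    ⟨⟨F k 0 0, hF _ _ _⟩, k, le_rfl, 0, 0, fun p => rfl⟩ (by
      rintro a ⟨l, hl, f, g, h⟩ hp
      obtain ⟨x, hx, y, hy, hxy⟩ := hcon l hl f g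
      have := hp (⟨x, hx⟩, ⟨y, hy⟩)
      rw [h] at this
      exact absurd this (not_lt.2 hxy))
  have hci : Integrable (fun p => c (e p)) γ :=
    (hc.comp he).integrable_of_hasCompactSupport (HasCompactSupport.of_compactSpace _)
  have hdi : Integrable (fun p => d (e p)) γ :=
    (hd.comp he).integrable_of_hasCompactSupport (HasCompactSupport.of_compactSpace _)
  have hfi : ∀ f : Euc N →ᵇ ℝ, Integrable (fun p : K × K => f p.1.1) γ := fun f =>
    (f.continuous.comp (by fun_prop : Continuous fun p : K × K => p.1.1)).integrable_of_hasCompactSupport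
      (HasCompactSupport.of_compactSpace _)
  have hgi : ∀ f : Euc N →ᵇ ℝ, Integrable (fun p : K × K => f p.2.1) γ := fun f =>
    (f.continuous.comp (by fun_prop : Continuous fun p : K × K => p.2.1)).integrable_of_hasCompactSupport
      (HasCompactSupport.of_compactSpace _)
  have key : ∀ l, k ≤ l → ∀ f g : Euc N →ᵇ ℝ,
      l * (∫ p, c (e p) ∂γ - C) + (∫ p, d (e p) ∂γ - D) + (∫ p, f p.1.1 ∂γ - ∫ z, f z ∂μ)
        + (∫ p, g p.2.1 ∂γ - ∫ z, g z ∂ν) + ε ≤ 0 := by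
    intro l hl f g
    have h := hγA ⟨F l f g, hF _ _ _⟩ ⟨l, hl, f, g, fun p => rfl⟩
    have i1 := (hci.sub (integrable_const C)).const_mul l
    have i2 := (hdi.sub (integrable_const D))
    have i3 := ((hfi f).sub (integrable_const (∫ z, f z ∂μ)))
    have i4 := ((hgi g).sub (integrable_const (∫ z, g z ∂ν)))
    have : ∫ p, F l f g p ∂γ = l * (∫ p, c (e p) ∂γ - C) + (∫ p, d (e p) ∂γ - D)
        + (∫ p, f p.1.1 ∂γ - ∫ z, f z ∂μ) + (∫ p, g p.2.1 ∂γ - ∫ z, g z ∂ν) + ε := by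
      have s1 := integral_add (((i1.add i2).add i3).add i4) (integrable_const ε)
      have s2 := integral_add ((i1.add i2).add i3) i4
      have s3 := integral_add (i1.add i2) i3
      have s4 := integral_add i1 i2
      have s5 : ∫ p, l * (c (e p) - C) ∂γ = l * (∫ p, c (e p) ∂γ - C) := by
        rw [integral_const_mul, integral_sub hci (integrable_const C)]; simp
      have s6 : ∫ p, (d (e p) - D) ∂γ = (∫ p, d (e p) ∂γ - D) := by
        rw [integral_sub hdi (integrable_const D)]; simp
      have s7 : ∫ p : K × K, (f p.1.1 - ∫ z, f z ∂μ) ∂γ = ∫ p, f p.1.1 ∂γ - ∫ z, f z ∂μ := by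
        rw [integral_sub (hfi f) (integrable_const _)]; simp
      have s8 : ∫ p : K × K, (g p.2.1 - ∫ z, g z ∂ν) ∂γ = ∫ p, g p.2.1 ∂γ - ∫ z, g z ∂ν := by
        rw [integral_sub (hgi g) (integrable_const _)]; simp
      have s9 : ∫ p : K × K, ε ∂γ = ε := by simp
      rw [← s5, ← s6, ← s7, ← s8]
      conv_rhs => rw [← s9]
      refine s1.trans ?_
      congr 1
      refine s2.trans ?_
      congr 1
      refine s3.trans ?_
      congr 1
    rw [← this]
    exact h
  -- a linear functional bounded above vanishes
  have lin : ∀ a b : ℝ, (∀ t : ℝ, t * a + b ≤ 0) → a = 0 := by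
    intro a b h
    by_contra ha
    have := h ((|b| + 1) / a)
    rw [div_mul_cancel₀ _ ha] at this
    linarith [neg_abs_le b]
  have hmf : ∀ f : Euc N →ᵇ ℝ, ∫ p, f p.1.1 ∂γ = ∫ z, f z ∂μ := by
    intro f
    refine sub_eq_zero.1 (lin _ (k * (∫ p, c (e p) ∂γ - C) + (∫ p, d (e p) ∂γ - D) + ε) ?_)
    intro t
    have := key k le_rfl (t • f) 0
    simp only [BoundedContinuousFunction.coe_smul, smul_eq_mul, integral_const_mul,
      BoundedContinuousFunction.coe_zero, Pi.zero_apply, integral_zero] at this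
    linarith
  have hmg : ∀ f : Euc N →ᵇ ℝ, ∫ p, f p.2.1 ∂γ = ∫ z, f z ∂ν := by
    intro f
    refine sub_eq_zero.1 (lin _ (k * (∫ p, c (e p) ∂γ - C) + (∫ p, d (e p) ∂γ - D) + ε) ?_)
    intro t
    have := key k le_rfl 0 (t • f)
    simp only [BoundedContinuousFunction.coe_smul, smul_eq_mul, integral_const_mul,
      BoundedContinuousFunction.coe_zero, Pi.zero_apply, integral_zero] at this
    linarith
  have key0 : ∀ l, k ≤ l → l * (∫ p, c (e p) ∂γ - C) + (∫ p, d (e p) ∂γ - D) + ε ≤ 0 := by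
    intro l hl
    have := key l hl 0 0
    simp only [BoundedContinuousFunction.coe_zero, Pi.zero_apply, integral_zero] at this
    linarith
  have hcC : ∫ p, c (e p) ∂γ ≤ C := by
    by_contra! hlt
    set a := ∫ p, c (e p) ∂γ - C with ha
    have hapos : 0 < a := by linarith
    set b := (∫ p, d (e p) ∂γ - D)
    have := key0 (|k| + (|b| + 1) / a) (by
      have : 0 ≤ (|b| + 1) / a := by positivity
      linarith [le_abs_self k])
    rw [add_mul, div_mul_cancel₀ _ hapos.ne'] at this
    have : 0 ≤ |k| * a := by positivity
    linarith [neg_abs_le b]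
  have hem : Measurable e := he.measurable
  have hγ' : IsProbabilityMeasure (γ.map e) := Measure.isProbabilityMeasure_map hem.aemeasurable
  have hcoup : IsCoupling μ ν (γ.map e) := by
    refine ⟨hγ', ?_, ?_⟩
    · have : IsProbabilityMeasure ((γ.map e).map Prod.fst) :=
        Measure.isProbabilityMeasure_map measurable_fst.aemeasurable
      apply ext_of_forall_integral_eq_of_IsFiniteMeasure
      intro f
      rw [integral_map measurable_fst.aemeasurable f.continuous.aestronglyMeasurable,
        integral_map hem.aemeasurable
          (by fun_prop : Continuous fun p : Euc N × Euc N => f p.1).aestronglyMeasurable]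
      exact hmf f
    · have : IsProbabilityMeasure ((γ.map e).map Prod.snd) :=
        Measure.isProbabilityMeasure_map measurable_snd.aemeasurable
      apply ext_of_forall_integral_eq_of_IsFiniteMeasure
      intro f
      rw [integral_map measurable_snd.aemeasurable f.continuous.aestronglyMeasurable,
        integral_map hem.aemeasurable
          (by fun_prop : Continuous fun p : Euc N × Euc N => f p.2).aestronglyMeasurable]
      exact hmg f
  have hconc : (γ.map e) (K ×ˢ K)ᶜ = 0 := by
    rw [Measure.map_apply hem (hK.measurableSet.prod hK.measurableSet).compl]
    convert measure_empty (μ := γ)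
    ext p
    simp [e]
  have h1 := hopt _ hcoup hconc (by
    rwa [integral_map hem.aemeasurable hc.aestronglyMeasurable])
  rw [integral_map hem.aemeasurable hd.aestronglyMeasurable] at h1
  have h2 := hmin _ hcoup hconc
  rw [integral_map hem.aemeasurable hc.aestronglyMeasurable] at h2
  have h3 := key0 k le_rfl
  have h4 : ∫ p, c (e p) ∂γ - C = 0 := by linarith
  rw [h4] at h3
  linarith

lemma coupling_conc {N : ℕ} {μ ν : Measure (Euc N)} {γ : Measure (Euc N × Euc N)}
    (h : IsCoupling μ ν γ) {K : Set (Euc N)} (hK : IsCompact K) (h1 : μ Kᶜ = 0)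
    (h2 : ν Kᶜ = 0) : γ (K ×ˢ K)ᶜ = 0 := by
  obtain ⟨_, hm, hn⟩ := h
  rw [← hm, Measure.map_apply measurable_fst hK.measurableSet.compl] at h1
  rw [← hn, Measure.map_apply measurable_snd hK.measurableSet.compl] at h2
  refine measure_mono_null ?_ (measure_union_null h1 h2)
  rintro ⟨x, y⟩ hxy
  simp only [mem_compl_iff, mem_prod, not_and_or] at hxy
  simpa using hxy

lemma integrable_of_conc {N : ℕ} {γ : Measure (Euc N × Euc N)} [IsProbabilityMeasure γ]
    {K : Set (Euc N)} (hK : IsCompact K) (hγ : γ (K ×ˢ K)ᶜ = 0) {h : Euc N × Euc N → ℝ}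
    (hh : Continuous h) : Integrable h γ := by
  have : IntegrableOn h (K ×ˢ K) γ := hh.continuousOn.integrableOn_compact (hK.prod hK)
  rwa [IntegrableOn, Measure.restrict_eq_self_of_ae_mem (by
    rw [ae_iff]; exact hγ)] at this

end Helpers

theorem secondary_optimal_concentrated_on_doubly_monotone {N : ℕ}
    (c : Euc N → Euc N → ℝ)
    (hc : Continuous fun p : Euc N × Euc N => c p.1 p.2)
    (hcnn : ∀ x y, 0 ≤ c x y)
    (μ ν : Measure (Euc N)) [IsProbabilityMeasure μ] [IsProbabilityMeasure ν]
    (hμcpt : ∃ K : Set (Euc N), IsCompact K ∧ μ Kᶜ = 0)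
    (hνcpt : ∃ K : Set (Euc N), IsCompact K ∧ ν Kᶜ = 0)
    (hfin : minCost c μ ν ≠ ⊤)
    (π : Measure (Euc N × Euc N)) (hπ : IsSecondaryOptimal c μ ν π) :
    ∃ Γ : Set (Euc N × Euc N), π Γᶜ = 0 ∧
      ∀ x y x' y', (x, y) ∈ Γ → (x', y') ∈ Γ →
        c x y + c x' y' ≤ c x y' + c x' y ∧
        (c x y + c x' y' = c x y' + c x' y →
          dist x y ^ 2 + dist x' y' ^ 2 ≤ dist x y' ^ 2 + dist x' y ^ 2) := by
  obtain ⟨K₁, hK₁, hμK⟩ := hμcpt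
  obtain ⟨K₂, hK₂, hνK⟩ := hνcpt
  let K := K₁ ∪ K₂
  have hK : IsCompact K := hK₁.union hK₂
  have hμK' : μ Kᶜ = 0 := measure_mono_null (compl_subset_compl.2 subset_union_left) hμK
  have hνK' : ν Kᶜ = 0 := measure_mono_null (compl_subset_compl.2 subset_union_right) hνK
  let c' : Euc N × Euc N → ℝ := fun p => c p.1 p.2
  let d' : Euc N × Euc N → ℝ := fun p => dist p.1 p.2 ^ 2
  have hd' : Continuous d' := by fun_prop
  obtain ⟨⟨hcp, hmin⟩, hsec⟩ := hπ
  have conc : ∀ γ, IsCoupling μ ν γ → γ (K ×ˢ K)ᶜ = 0 := fun γ hγ =>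
    coupling_conc hγ hK hμK' hνK'
  have hcost : ∀ γ, IsCoupling μ ν γ → planCost c γ = ENNReal.ofReal (∫ p, c' p ∂γ) := by
    intro γ hγ
    have := hγ.1
    rw [ofReal_integral_eq_lintegral_ofReal (integrable_of_conc hK (conc γ hγ) hc)
      (Filter.Eventually.of_forall fun p => hcnn _ _)]
    rfl
  have hcost2 : ∀ γ, IsCoupling μ ν γ → secondaryCost γ = ENNReal.ofReal (∫ p, d' p ∂γ) := by
    intro γ hγ
    have := hγ.1
    rw [ofReal_integral_eq_lintegral_ofReal (integrable_of_conc hK (conc γ hγ) hd')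
      (Filter.Eventually.of_forall fun p => sq_nonneg _)]
    rfl
  have hcge : ∀ γ : Measure (Euc N × Euc N), 0 ≤ ∫ p, c' p ∂γ :=
    fun γ => integral_nonneg fun p => hcnn _ _
  have hdge : ∀ γ : Measure (Euc N × Euc N), 0 ≤ ∫ p, d' p ∂γ :=
    fun γ => integral_nonneg fun p => sq_nonneg _
  have hle : ∀ γ, IsCoupling μ ν γ → minCost c μ ν ≤ planCost c γ := fun γ hγ =>
    iInf₂_le (f := fun (π : Measure (Euc N × Euc N)) (_ : π ∈ {π | IsCoupling μ ν π}) =>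
      planCost c π) γ hγ
  have hmin' : ∀ γ : Measure (Euc N × Euc N), IsCoupling μ ν γ → γ (K ×ˢ K)ᶜ = 0 →
      ∫ p, c' p ∂π ≤ ∫ p, c' p ∂γ := by
    intro γ hγ _
    have := hle γ hγ
    rw [← hmin, hcost γ hγ, hcost π hcp] at this
    exact (ENNReal.ofReal_le_ofReal_iff (hcge γ)).1 this
  have hopt' : ∀ γ : Measure (Euc N × Euc N), IsCoupling μ ν γ → γ (K ×ˢ K)ᶜ = 0 →
      ∫ p, c' p ∂γ ≤ ∫ p, c' p ∂π → ∫ p, d' p ∂π ≤ ∫ p, d' p ∂γ := by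
    intro γ hγ _ h
    have h1 : IsOptimalPlan c μ ν γ := by
      refine ⟨hγ, le_antisymm ?_ (hle γ hγ)⟩
      rw [← hmin, hcost γ hγ, hcost π hcp]
      exact ENNReal.ofReal_le_ofReal h
    have := hsec γ h1
    rw [hcost2 γ hγ, hcost2 π hcp] at this
    exact (ENNReal.ofReal_le_ofReal_iff (hdge γ)).1 this
  have hdual := fun n : ℕ => exists_dual c' d' hc hd' μ ν K hK (∫ p, c' p ∂π) (∫ p, d' p ∂π)
    hmin' hopt' n ((1 / 2 : ℝ) ^ n) (by positivity)
  choose l hl f g hfg using hdual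
  have hprob := hcp.1
  let F : ℕ → Euc N × Euc N → ℝ := fun n p =>
    l n * (c' p - ∫ p, c' p ∂π) + (d' p - ∫ p, d' p ∂π) + (f n p.1 - ∫ z, f n z ∂μ)
      + (g n p.2 - ∫ z, g n z ∂ν) + (1 / 2 : ℝ) ^ n
  have hFc : ∀ n, Continuous (F n) := by
    intro n
    have := (f n).continuous
    have := (g n).continuous
    have : Continuous c' := hc
    fun_prop
  have hci := integrable_of_conc hK (conc π hcp) hc
  have hdi := integrable_of_conc hK (conc π hcp) hd'
  have hFint : ∀ n, ∫ p, F n p ∂π = (1 / 2 : ℝ) ^ n := by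
    intro n
    have j3 : Integrable (fun p : Euc N × Euc N => f n p.1) π :=
      integrable_of_conc hK (conc π hcp) ((f n).continuous.comp continuous_fst)
    have j4 : Integrable (fun p : Euc N × Euc N => g n p.2) π :=
      integrable_of_conc hK (conc π hcp) ((g n).continuous.comp continuous_snd)
    have i1 := (hci.sub (integrable_const (∫ p, c' p ∂π))).const_mul (l n)
    have i2 := hdi.sub (integrable_const (∫ p, d' p ∂π))
    have i3 := j3.sub (integrable_const (∫ z, f n z ∂μ))
    have i4 := j4.sub (integrable_const (∫ z, g n z ∂ν))
    have s1 := integral_add (((i1.add i2).add i3).add i4) (integrable_const ((1 / 2 : ℝ) ^ n))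
    have s2 := integral_add ((i1.add i2).add i3) i4
    have s3 := integral_add (i1.add i2) i3
    have s4 := integral_add i1 i2
    have s5 : ∫ p, l n * (c' p - ∫ p, c' p ∂π) ∂π = 0 := by
      rw [integral_const_mul, integral_sub hci (integrable_const _)]; simp [c']
    have s6 : ∫ p, (d' p - ∫ p, d' p ∂π) ∂π = 0 := by
      rw [integral_sub hdi (integrable_const _)]; simp
    have s7 : ∫ p : Euc N × Euc N, (f n p.1 - ∫ z, f n z ∂μ) ∂π = 0 := by
      rw [integral_sub j3 (integrable_const _)]
      have : ∫ z, f n z ∂μ = ∫ p, f n p.1 ∂π := by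
        rw [← hcp.2.1, integral_map measurable_fst.aemeasurable
          (f n).continuous.aestronglyMeasurable]
      rw [this]; simp
    have s8 : ∫ p : Euc N × Euc N, (g n p.2 - ∫ z, g n z ∂ν) ∂π = 0 := by
      rw [integral_sub j4 (integrable_const _)]
      have : ∫ z, g n z ∂ν = ∫ p, g n p.2 ∂π := by
        rw [← hcp.2.2, integral_map measurable_snd.aemeasurable
          (g n).continuous.aestronglyMeasurable]
      rw [this]; simp
    have s9 : ∫ p : Euc N × Euc N, (1 / 2 : ℝ) ^ n ∂π = (1 / 2 : ℝ) ^ n := by simp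
    have e4 := s4.trans (congrArg₂ (· + ·) s5 s6)
    have e3 := s3.trans (congrArg₂ (· + ·) e4 s7)
    have e2 := s2.trans (congrArg₂ (· + ·) e3 s8)
    have e1 := s1.trans (congrArg₂ (· + ·) e2 s9)
    refine Eq.trans e1 ?_
    simp
  have hKae : ∀ᵐ p ∂π, p ∈ K ×ˢ K := by rw [ae_iff]; exact conc π hcp
  have hFpos : ∀ n p, p ∈ K ×ˢ K → 0 < F n p := fun n p hp => hfg n p.1 hp.1 p.2 hp.2
  have hsum : ∫⁻ p, ∑' n, ENNReal.ofReal (F n p) ∂π ≠ ⊤ := by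
    rw [lintegral_tsum fun n => ((hFc n).measurable.ennreal_ofReal).aemeasurable]
    have : ∀ n, ∫⁻ p, ENNReal.ofReal (F n p) ∂π = ENNReal.ofReal ((1 / 2 : ℝ) ^ n) := by
      intro n
      rw [← hFint n, ofReal_integral_eq_lintegral_ofReal
        (integrable_of_conc hK (conc π hcp) (hFc n))]
      filter_upwards [hKae] with p hp using (hFpos n p hp).le
    simp_rw [this]
    rw [← ENNReal.ofReal_tsum_of_nonneg (fun n => by positivity) summable_geometric_two]
    exact ENNReal.ofReal_ne_top
  have hae : ∀ᵐ p ∂π, ∑' n, ENNReal.ofReal (F n p) < ⊤ :=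
    ae_lt_top (Measurable.ennreal_tsum fun n => (hFc n).measurable.ennreal_ofReal) hsum
  have hlim : ∀ᵐ p ∂π, p ∈ K ×ˢ K ∧ Filter.Tendsto (fun n => F n p) Filter.atTop (nhds 0) := by
    filter_upwards [hKae, hae] with p hp hs
    refine ⟨hp, ?_⟩
    have h1 := ENNReal.tendsto_atTop_zero_of_tsum_ne_top hs.ne
    have h2 := (ENNReal.tendsto_toReal ENNReal.zero_ne_top).comp h1
    simp only [ENNReal.toReal_zero] at h2
    refine h2.congr fun n => ?_
    exact ENNReal.toReal_ofReal (hFpos n p hp).le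
  refine ⟨{p | p ∈ K ×ˢ K ∧ Filter.Tendsto (fun n => F n p) Filter.atTop (nhds 0)},
    ae_iff.1 hlim, ?_⟩
  rintro x y x' y' ⟨⟨hx, hy⟩, h1⟩ ⟨⟨hx', hy'⟩, h2⟩
  have h12 := h1.add h2
  rw [add_zero] at h12
  have hineq : ∀ n, 0 ≤ (F n (x, y) + F n (x', y'))
      + l n * ((c x y' + c x' y) - (c x y + c x' y'))
      + ((dist x y' ^ 2 + dist x' y ^ 2) - (dist x y ^ 2 + dist x' y' ^ 2)) := by
    intro n
    have a1 := hFpos n (x, y') ⟨hx, hy'⟩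
    have a2 := hFpos n (x', y) ⟨hx', hy⟩
    simp only [F, c', d'] at a1 a2 ⊢
    linarith
  constructor
  · by_contra! hlt
    set δ := (c x y + c x' y') - (c x y' + c x' y) with hδ
    have hδpos : 0 < δ := by linarith
    set b := ((dist x y' ^ 2 + dist x' y ^ 2) - (dist x y ^ 2 + dist x' y' ^ 2))
    have ev := h12.eventually (gt_mem_nhds one_pos)
    have ev2 := tendsto_natCast_atTop_atTop (R := ℝ) |>.eventually_ge_atTop ((1 + b) / δ)
    obtain ⟨n, hn1, hn2⟩ := (ev.and ev2).exists
    have h3 := hineq n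
    have h4 : 1 + b ≤ l n * δ := by
      rw [← div_le_iff₀ hδpos]; exact hn2.trans (hl n)
    have h5 : (c x y' + c x' y) - (c x y + c x' y') = -δ := by rw [hδ]; ring
    rw [h5] at h3
    linarith
  · intro heq
    have h3 : ∀ n, (dist x y ^ 2 + dist x' y' ^ 2) - (dist x y' ^ 2 + dist x' y ^ 2)
        ≤ F n (x, y) + F n (x', y') := by
      intro n
      have := hineq n
      rw [heq, sub_self, mul_zero] at this
      linarith
    have := ge_of_tendsto' h12 h3
    linarith
end
end
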